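/- There exists a universal constant C > 0 such that the following holds for all positive integers n ≥ 2 and d. Given symmetric matrices A_1, ..., A_n ∈ ℝ^{d×d} each satisfying ‖A_i‖_op ≤ 1 and ‖A_i‖_F² ≤ n / (log n)³, there exist signs x_1, ..., x_n ∈ {−1, +1} such that ‖∑_{i=1}^n x_i A_i‖_op ≤ C √n. -/

import Mathlib

open MeasureTheory ProbabilityTheory

/-- Operator norm (largest singular value) of a real matrix, as the norm of the
induced linear map between Euclidean spaces. -/
noncomputable def opNorm {m n : Type*} [Fintype m] [Fintype n] [DecidableEq n]
    (M : Matrix m n ℝ) : ℝ :=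
  ‖LinearMap.toContinuousLinearMap (Matrix.toEuclideanLin M)‖

/-- Squared Frobenius norm of a real matrix. -/
noncomputable def frobNormSq {m n : Type*} [Fintype m] [Fintype n]
    (M : Matrix m n ℝ) : ℝ := ∑ i, ∑ j, (M i j) ^ 2

set_option linter.unusedSectionVars false
set_option linter.unusedVariables false

namespace MSp
open Matrix

section basics
variable {J : Type*} [Fintype J] [DecidableEq J]

lemma psd_of {M : Matrix J J ℝ} (hM : Mᵀ = M) (h : ∀ w : J → ℝ, 0 ≤ w ⬝ᵥ M *ᵥ w) :
    M.PosSemidef := by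
  refine PosSemidef.of_dotProduct_mulVec_nonneg ?_ ?_
  · simpa [IsHermitian, conjTranspose_eq_transpose_of_trivial] using hM
  · intro x; simpa using h x

lemma psd_form {M : Matrix J J ℝ} (hM : M.PosSemidef) (w : J → ℝ) : 0 ≤ w ⬝ᵥ M *ᵥ w := by
  simpa using hM.dotProduct_mulVec_nonneg w

lemma psd_symm {M : Matrix J J ℝ} (hM : M.PosSemidef) : Mᵀ = M := by
  simpa [IsHermitian, conjTranspose_eq_transpose_of_trivial] using hM.1

lemma psd_conj {A B : Matrix J J ℝ} (hA : A.PosSemidef) (hB : Bᵀ = B) :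
    (B * A * B).PosSemidef := by
  have := hA.mul_mul_conjTranspose_same B
  rwa [conjTranspose_eq_transpose_of_trivial, hB] at this

lemma psd_smul {A : Matrix J J ℝ} (hA : A.PosSemidef) {c : ℝ} (hc : 0 ≤ c) :
    (c • A).PosSemidef := hA.smul hc

lemma psd_sq {B : Matrix J J ℝ} (hB : Bᵀ = B) : (B * B).PosSemidef := by
  have := psd_conj (PosSemidef.one : (1 : Matrix J J ℝ).PosSemidef) hB
  simpa using this

/-- spectral decomposition -/
lemma spec {K : Matrix J J ℝ} (hK : Kᵀ = K) : ∃ (V : Matrix J J ℝ) (l : J → ℝ),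
    Vᵀ * V = 1 ∧ V * Vᵀ = 1 ∧ K = V * diagonal l * Vᵀ := by
  have hH : K.IsHermitian := by
    simpa [IsHermitian, conjTranspose_eq_transpose_of_trivial] using hK
  refine ⟨hH.eigenvectorUnitary, hH.eigenvalues, ?_, ?_, ?_⟩
  · have := (Matrix.mem_unitaryGroup_iff'.mp hH.eigenvectorUnitary.2)
    simpa [star_eq_conjTranspose, conjTranspose_eq_transpose_of_trivial] using this
  · have := (Matrix.mem_unitaryGroup_iff.mp hH.eigenvectorUnitary.2)
    simpa [star_eq_conjTranspose, conjTranspose_eq_transpose_of_trivial] using this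
  · have := hH.spectral_theorem
    rw [Unitary.conjStarAlgAut_apply] at this
    rw [star_eq_conjTranspose, conjTranspose_eq_transpose_of_trivial] at this
    exact this

lemma spec_pow {V : Matrix J J ℝ} {l : J → ℝ} (h : Vᵀ * V = 1) (h' : V * Vᵀ = 1) (a : ℕ) :
    (V * diagonal l * Vᵀ) ^ a = V * diagonal (fun k => l k ^ a) * Vᵀ := by
  induction a with
  | zero => simp [h']
  | succ a ih =>
    rw [pow_succ, ih]
    calc V * diagonal (fun k => l k ^ a) * Vᵀ * (V * diagonal l * Vᵀ)
        = V * diagonal (fun k => l k ^ a) * (Vᵀ * V) * diagonal l * Vᵀ := by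
          simp only [Matrix.mul_assoc]
      _ = _ := by
          rw [h, Matrix.mul_one, Matrix.mul_assoc V, diagonal_mul_diagonal]
          simp only [pow_succ]

lemma spec_psd {K V : Matrix J J ℝ} {l : J → ℝ} (h : Vᵀ * V = 1)
    (hK : K = V * diagonal l * Vᵀ) (hp : K.PosSemidef) (k : J) : 0 ≤ l k := by
  have h1 : (Vᵀ * K * V).PosSemidef := by
    have := hp.conjTranspose_mul_mul_same V
    rwa [conjTranspose_eq_transpose_of_trivial] at this
  have h2 : Vᵀ * K * V = diagonal l := by
    rw [hK]
    calc Vᵀ * (V * diagonal l * Vᵀ) * V = (Vᵀ * V) * diagonal l * (Vᵀ * V) := by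
          simp only [Matrix.mul_assoc]
      _ = _ := by simp [h]
  rw [h2] at h1
  have := h1.diag_nonneg (i := k)
  simpa using this

lemma psd_of_spec {K V : Matrix J J ℝ} {l : J → ℝ}
    (hK : K = V * diagonal l * Vᵀ) (hl : ∀ k, 0 ≤ l k) : K.PosSemidef := by
  have h1 : (diagonal l).PosSemidef := PosSemidef.diagonal hl
  have := h1.mul_mul_conjTranspose_same V
  rwa [conjTranspose_eq_transpose_of_trivial, ← hK] at this

lemma trace_diag_form (l m : J → ℝ) (M N : Matrix J J ℝ) :
    (diagonal l * M * diagonal m * N).trace = ∑ i, ∑ j, l i * m j * (M i j * N j i) := by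
  simp only [trace, diag_apply, mul_apply (M := diagonal l * M * diagonal m),
    mul_diagonal, diagonal_mul]
  refine Finset.sum_congr rfl fun i _ => Finset.sum_congr rfl fun j _ => by ring

lemma trace_mul_nonneg {P Q : Matrix J J ℝ} (hP : P.PosSemidef) (hQ : Q.PosSemidef) :
    0 ≤ (P * Q).trace := by
  obtain ⟨V, l, h, h', hK⟩ := spec (psd_symm hP)
  have hl := spec_psd h hK hP
  have : (P * Q).trace = (diagonal l * (Vᵀ * Q * V)).trace := by
    rw [hK, Matrix.mul_assoc, Matrix.mul_assoc, Matrix.trace_mul_comm]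
    simp only [Matrix.mul_assoc]
  rw [this]
  have h1 : (Vᵀ * Q * V).PosSemidef := by
    have := hQ.conjTranspose_mul_mul_same V
    rwa [conjTranspose_eq_transpose_of_trivial] at this
  simp only [trace, diag_apply, diagonal_mul]
  exact Finset.sum_nonneg fun i _ => mul_nonneg (hl i) h1.diag_nonneg

lemma trace_mul_le {P A B : Matrix J J ℝ} (hP : P.PosSemidef) (h : (B - A).PosSemidef) :
    (P * A).trace ≤ (P * B).trace := by
  have := trace_mul_nonneg hP h
  rw [Matrix.mul_sub, trace_sub] at this
  linarith

/-- `Tr (K^a L K^b L) ≤ Tr (K^(a+b) L^2)`. -/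
lemma trace_rearr {K L : Matrix J J ℝ} (hK : K.PosSemidef) (hL : Lᵀ = L) (a b : ℕ) :
    (K ^ a * L * K ^ b * L).trace ≤ (K ^ (a + b) * L * L).trace := by
  obtain ⟨V, l, h, h', hKV⟩ := spec (psd_symm hK)
  have hl := spec_psd h hKV hK
  set N := Vᵀ * L * V with hN
  have hNs : Nᵀ = N := by rw [hN]; simp [Matrix.transpose_mul, hL, Matrix.mul_assoc]
  have key : ∀ a b : ℕ, (K ^ a * L * K ^ b * L).trace = ∑ i, ∑ j, l i ^ a * l j ^ b * N i j ^ 2 := by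
    intro a b
    have : (K ^ a * L * K ^ b * L).trace =
        (diagonal (fun k => l k ^ a) * N * diagonal (fun k => l k ^ b) * N).trace := by
      rw [hKV, spec_pow h h', spec_pow h h']
      rw [show V * diagonal (fun k => l k ^ a) * Vᵀ * L * (V * diagonal (fun k => l k ^ b) * Vᵀ) * L
        = V * (diagonal (fun k => l k ^ a) * Vᵀ * L * V * diagonal (fun k => l k ^ b) * Vᵀ * L) by
          simp only [Matrix.mul_assoc], Matrix.trace_mul_comm]
      simp only [hN, Matrix.mul_assoc]
    rw [this, trace_diag_form]
    refine Finset.sum_congr rfl fun i _ => Finset.sum_congr rfl fun j _ => ?_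
    have : N j i = N i j := congrFun (congrFun hNs i) j
    rw [this]; ring
  have e2 : (K ^ (a + b) * L * L).trace = ∑ i, ∑ j, l i ^ (a + b) * N i j ^ 2 := by
    have := key (a + b) 0
    simpa using this
  have e3 : (K ^ (a + b) * L * L).trace = ∑ i, ∑ j, l j ^ (a + b) * N i j ^ 2 := by
    rw [e2, Finset.sum_comm]
    refine Finset.sum_congr rfl fun i _ => Finset.sum_congr rfl fun j _ => ?_
    have : N j i = N i j := congrFun (congrFun hNs i) j
    rw [this]
  have e1' : (K ^ a * L * K ^ b * L).trace = ∑ i, ∑ j, l j ^ a * l i ^ b * N i j ^ 2 := by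
    rw [key, Finset.sum_comm]
    refine Finset.sum_congr rfl fun i _ => Finset.sum_congr rfl fun j _ => ?_
    have : N j i = N i j := congrFun (congrFun hNs i) j
    rw [this]
  have h1 := key a b
  suffices (K ^ a * L * K ^ b * L).trace + (K ^ a * L * K ^ b * L).trace ≤
    (K ^ (a + b) * L * L).trace + (K ^ (a + b) * L * L).trace by linarith
  nth_rewrite 1 [h1]
  rw [e1']
  nth_rewrite 1 [e2]
  rw [e3, ← Finset.sum_add_distrib, ← Finset.sum_add_distrib]
  refine Finset.sum_le_sum fun i _ => ?_
  rw [← Finset.sum_add_distrib, ← Finset.sum_add_distrib]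
  refine Finset.sum_le_sum fun j _ => ?_
  have : 0 ≤ (l i ^ a - l j ^ a) * (l i ^ b - l j ^ b) := by
    rcases le_total (l i) (l j) with hh | hh
    · exact mul_nonneg_of_nonpos_of_nonpos
        (sub_nonpos.2 (pow_le_pow_left₀ (hl i) hh a)) (sub_nonpos.2 (pow_le_pow_left₀ (hl i) hh b))
    · exact mul_nonneg
        (sub_nonneg.2 (pow_le_pow_left₀ (hl j) hh a)) (sub_nonneg.2 (pow_le_pow_left₀ (hl j) hh b))
  have h3 := mul_nonneg this (sq_nonneg (N i j))
  rw [pow_add, pow_add]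
  nlinarith [h3]

lemma le_one_of_trace_pow {K : Matrix J J ℝ} (hK : K.PosSemidef) {p : ℕ} (hp : p ≠ 0)
    (h : (K ^ p).trace ≤ 1) : (1 - K).PosSemidef := by
  obtain ⟨V, l, hV, hV', hKV⟩ := spec (psd_symm hK)
  have hl := spec_psd hV hKV hK
  have ht : (K ^ p).trace = ∑ k, l k ^ p := by
    rw [hKV, spec_pow hV hV', Matrix.mul_assoc, Matrix.trace_mul_comm, Matrix.mul_assoc, hV]
    simp [trace]
  have hl1 : ∀ k, l k ≤ 1 := by
    intro k
    have : l k ^ p ≤ 1 := by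
      refine le_trans ?_ h
      rw [ht]
      exact Finset.single_le_sum (f := fun k => l k ^ p) (fun i _ => pow_nonneg (hl i) p)
        (Finset.mem_univ k)
    exact (pow_le_one_iff_of_nonneg (hl k) hp).mp this
  refine psd_of_spec (V := V) (l := fun k => 1 - l k) ?_ (fun k => by linarith [hl1 k])
  have : diagonal (fun k => 1 - l k) = 1 - diagonal l := by
    ext i j; by_cases hij : i = j <;> simp [hij, diagonal, one_apply]
  rw [this, Matrix.mul_sub, Matrix.sub_mul, Matrix.mul_one, hV', ← hKV]

lemma trace_pow_le {K : Matrix J J ℝ} (hK : K.PosSemidef) {c : ℝ} (hc : 0 ≤ c)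
    (h : (c • (1 : Matrix J J ℝ) - K).PosSemidef) (p : ℕ) :
    (K ^ p).trace ≤ Fintype.card J * c ^ p := by
  induction p with
  | zero => simp
  | succ p ih =>
    rw [pow_succ]
    have := trace_mul_le (hK.pow p) h
    rw [Matrix.mul_smul, Matrix.mul_one, trace_smul, smul_eq_mul] at this
    calc _ ≤ _ := this
      _ ≤ c * (Fintype.card J * c ^ p) := by gcongr
      _ = _ := by ring

/-- commuting product `R (ρ - R)` -/
lemma psd_mul_sub {R : Matrix J J ℝ} {ρ : ℝ} (hρ : 0 < ρ) (hR : R.PosSemidef)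
    (h : (ρ • (1 : Matrix J J ℝ) - R).PosSemidef) : (ρ • R - R * R).PosSemidef := by
  have h1 := psd_conj hR (psd_symm h)
  have h2 := psd_conj h (psd_symm hR)
  have h3 := psd_smul (h1.add h2) (inv_nonneg.2 hρ.le)
  convert h3 using 1
  simp only [Matrix.mul_sub, Matrix.sub_mul, smul_sub, Matrix.mul_smul, Matrix.smul_mul,
    Matrix.mul_one, Matrix.one_mul, smul_add, smul_smul, Matrix.mul_assoc]
  rw [show ρ⁻¹ * ρ = 1 by field_simp, show ρ⁻¹ * (ρ * ρ) = ρ by field_simp]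
  simp only [one_smul]
  abel

lemma psd_inv_ge {Y : Matrix J J ℝ} {c : ℝ} (hc : 0 < c) (hY : Y.PosDef)
    (h : (c • (1 : Matrix J J ℝ) - Y).PosSemidef) :
    (Y⁻¹ - c⁻¹ • (1 : Matrix J J ℝ)).PosSemidef := by
  have h1 := psd_mul_sub hc hY.posSemidef h
  have h2 := psd_conj h1 (psd_symm hY.inv.posSemidef)
  have h3 := psd_smul h2 (inv_nonneg.2 hc.le)
  have hu : IsUnit Y.det := (isUnit_iff_isUnit_det Y).1 hY.isUnit
  convert h3 using 1
  simp only [Matrix.mul_sub, Matrix.sub_mul, smul_sub, Matrix.mul_smul, Matrix.smul_mul,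
     smul_smul]
  rw [nonsing_inv_mul _ hu, Matrix.one_mul, ← Matrix.mul_assoc, nonsing_inv_mul _ hu,
    Matrix.one_mul, mul_nonsing_inv _ hu, inv_mul_cancel₀ hc.ne', one_smul]

lemma psd_of_inv_le {Y : Matrix J J ℝ} {c : ℝ} (hc : 0 < c) (hY : Y.PosDef)
    (h : (c • (1 : Matrix J J ℝ) - Y⁻¹).PosSemidef) :
    (Y - c⁻¹ • (1 : Matrix J J ℝ)).PosSemidef := by
  have := psd_inv_ge hc hY.inv h
  rwa [nonsing_inv_nonsing_inv _ ((isUnit_iff_isUnit_det Y).1 hY.isUnit)] at this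

lemma psd_inv_le {Y : Matrix J J ℝ} {c : ℝ} (hc : 0 < c) (hY : Y.PosDef)
    (h : (Y - c • (1 : Matrix J J ℝ)).PosSemidef) :
    (c⁻¹ • (1 : Matrix J J ℝ) - Y⁻¹).PosSemidef := by
  -- Y⁻¹ (Y(Y-c)) Y⁻¹
  have hu : IsUnit Y.det := (isUnit_iff_isUnit_det Y).1 hY.isUnit
  have h1 : (Y * Y - c • Y).PosSemidef := by
    have e : Y * Y - c • Y = (Y - c • (1 : Matrix J J ℝ)) * 1 * (Y - c • (1 : Matrix J J ℝ))
        + c • (Y - c • (1 : Matrix J J ℝ)) := by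
      simp only [Matrix.mul_sub, Matrix.sub_mul, smul_sub, Matrix.mul_smul, Matrix.smul_mul,
        smul_smul, Matrix.mul_one, Matrix.one_mul]
      abel
    rw [e]
    exact (psd_conj PosSemidef.one (psd_symm h)).add (psd_smul h hc.le)
  have h2 := psd_conj h1 (psd_symm hY.inv.posSemidef)
  have h3 := psd_smul h2 (inv_nonneg.2 hc.le)
  convert h3 using 1
  simp only [Matrix.mul_sub, Matrix.sub_mul, smul_sub, Matrix.mul_smul, Matrix.smul_mul,
     smul_smul]
  rw [nonsing_inv_mul _ hu, Matrix.one_mul, ← Matrix.mul_assoc, nonsing_inv_mul _ hu,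
    Matrix.one_mul, mul_nonsing_inv _ hu, inv_mul_cancel₀ hc.ne', one_smul]

lemma psd_sq_le {R : Matrix J J ℝ} {ρ : ℝ} (hρ : 0 < ρ) (hR : R.PosSemidef)
    (h : (ρ • (1 : Matrix J J ℝ) - R).PosSemidef) :
    ((ρ ^ 2) • (1 : Matrix J J ℝ) - R * R).PosSemidef := by
  have := (psd_mul_sub hρ hR h).add (psd_smul h hρ.le)
  convert this using 1
  rw [smul_sub, smul_smul, pow_two]; abel

/-- `|S x|² ` as a dot product for symmetric `S`. -/
lemma sq_form {S : Matrix J J ℝ} (hS : Sᵀ = S) (w : J → ℝ) :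
    w ⬝ᵥ (S * S) *ᵥ w = (S *ᵥ w) ⬝ᵥ (S *ᵥ w) := by
  rw [← mulVec_mulVec, dotProduct_mulVec, ← mulVec_transpose, hS]

lemma form_le {A B : Matrix J J ℝ} (h : (B - A).PosSemidef) (w : J → ℝ) :
    w ⬝ᵥ A *ᵥ w ≤ w ⬝ᵥ B *ᵥ w := by
  have := psd_form h w
  rw [sub_mulVec, dotProduct_sub] at this
  linarith

lemma norm_mulVec_le {R : Matrix J J ℝ} {ρ : ℝ} (hρ : 0 < ρ) (hR : R.PosSemidef)
    (h : (ρ • (1 : Matrix J J ℝ) - R).PosSemidef) (w : J → ℝ) :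
    (R *ᵥ w) ⬝ᵥ (R *ᵥ w) ≤ ρ ^ 2 * (w ⬝ᵥ w) := by
  rw [← sq_form (psd_symm hR)]
  refine (form_le (psd_sq_le hρ hR h) w).trans ?_
  simp [smul_mulVec]

end basics
end MSp

set_option linter.unusedSectionVars false
set_option linter.unusedVariables false

namespace MSp
open Matrix Filter Topology

section jets
variable {M : Type*} [Ring M] [Algebra ℝ M] [TopologicalSpace M] [IsTopologicalRing M]
  [ContinuousSMul ℝ M]

/-- Second order expansion at `0`. -/
def Jet (f : ℝ → M) (a b c : M) : Prop :=
  ∃ h : ℝ → M, ContinuousAt h 0 ∧ h 0 = c ∧ ∀ᶠ e in 𝓝 (0 : ℝ), f e = a + e • b + e ^ 2 • h e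

lemma Jet.const (a : M) : Jet (fun _ => a) a 0 0 :=
  ⟨fun _ => 0, continuousAt_const, rfl, by simp⟩

lemma Jet.add {f g : ℝ → M} {a b c a' b' c' : M} (hf : Jet f a b c) (hg : Jet g a' b' c') :
    Jet (fun e => f e + g e) (a + a') (b + b') (c + c') := by
  obtain ⟨h, h1, h2, h3⟩ := hf
  obtain ⟨k, k1, k2, k3⟩ := hg
  refine ⟨fun e => h e + k e, h1.add k1, by simp [h2, k2], ?_⟩
  filter_upwards [h3, k3] with e he ke
  rw [he, ke]; simp only [smul_add]; abel

lemma Jet.mul {f g : ℝ → M} {a b c a' b' c' : M} (hf : Jet f a b c) (hg : Jet g a' b' c') :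
    Jet (fun e => f e * g e) (a * a') (a * b' + b * a') (a * c' + b * b' + c * a') := by
  obtain ⟨h, h1, h2, h3⟩ := hf
  obtain ⟨k, k1, k2, k3⟩ := hg
  refine ⟨fun e => a * k e + b * b' + h e * a' + e • (b * k e + h e * b') + e ^ 2 • (h e * k e),
    ?_, by simp [h2, k2], ?_⟩
  · have hid : ContinuousAt (fun e : ℝ => e) 0 := continuousAt_id
    exact ((((continuousAt_const.mul k1).add continuousAt_const).add
      (h1.mul continuousAt_const)).add (hid.smul ((continuousAt_const.mul k1).add
        (h1.mul continuousAt_const)))).add ((hid.pow 2).smul (h1.mul k1))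
  filter_upwards [h3, k3] with e he ke
  rw [he, ke]
  simp only [smul_add, mul_add, add_mul, smul_mul_assoc, mul_smul_comm, smul_smul]
  ring_nf
  abel

lemma Jet.const_mul {f : ℝ → M} {a b c : M} (hf : Jet f a b c) (x : M) :
    Jet (fun e => x * f e) (x * a) (x * b) (x * c) := by
  have := (Jet.const x).mul hf
  simpa using this

lemma Jet.mul_const {f : ℝ → M} {a b c : M} (hf : Jet f a b c) (x : M) :
    Jet (fun e => f e * x) (a * x) (b * x) (c * x) := by
  have := hf.mul (Jet.const x)
  simpa using this

lemma Jet.sum {ι : Type*} (s : Finset ι) {f : ι → ℝ → M} {a b c : ι → M}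
    (hf : ∀ i, Jet (f i) (a i) (b i) (c i)) :
    Jet (fun e => ∑ i ∈ s, f i e) (∑ i ∈ s, a i) (∑ i ∈ s, b i) (∑ i ∈ s, c i) := by
  classical
  induction s using Finset.induction_on with
  | empty => simpa using Jet.const (0 : M)
  | insert i s hi ih =>
    simp only [Finset.sum_insert hi]
    exact (hf i).add ih

/-- first order coefficient of a power -/
def pw1 (a b : M) : ℕ → M
  | 0 => 0
  | p + 1 => a ^ p * b + pw1 a b p * a

/-- second order coefficient of a power -/
def pw2 (a b c : M) : ℕ → M
  | 0 => 0
  | p + 1 => a ^ p * c + pw1 a b p * b + pw2 a b c p * a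

lemma Jet.pow {f : ℝ → M} {a b c : M} (hf : Jet f a b c) (p : ℕ) :
    Jet (fun e => f e ^ p) (a ^ p) (pw1 a b p) (pw2 a b c p) := by
  induction p with
  | zero => simpa [pw1, pw2] using Jet.const (1 : M)
  | succ p ih =>
    simp only [pow_succ]
    exact ih.mul hf
end jets

section
variable {J : Type*} [Fintype J] [DecidableEq J]

lemma jet_inv {Y A D : Matrix J J ℝ} (hY : IsUnit Y.det) :
    Jet (fun e : ℝ => (Y - e • A + e ^ 2 • D)⁻¹) Y⁻¹ (Y⁻¹ * A * Y⁻¹)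
      (Y⁻¹ * A * Y⁻¹ * A * Y⁻¹ - Y⁻¹ * D * Y⁻¹) := by
  set R := Y⁻¹ with hR
  have hc : Continuous (fun e : ℝ => Y - e • A + e ^ 2 • D) := by fun_prop
  have hdet : ContinuousAt (fun e : ℝ => (Y - e • A + e ^ 2 • D).det) 0 :=
    (hc.matrix_det).continuousAt
  have hne : (Y - (0 : ℝ) • A + (0 : ℝ) ^ 2 • D).det ≠ 0 := by simpa using hY.ne_zero
  have hinv : ContinuousAt (fun e : ℝ => (Y - e • A + e ^ 2 • D)⁻¹) 0 := by
    simp only [Matrix.inv_def, Ring.inverse_eq_inv']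
    exact (hdet.inv₀ hne).smul (hc.matrix_adjugate).continuousAt
  refine ⟨fun e => R * (-A + e • D) * R * (-A + e • D) * (Y - e • A + e ^ 2 • D)⁻¹ - R * D * R,
    ?_, ?_, ?_⟩
  · have h1 : ContinuousAt (fun e : ℝ => R * (-A + e • D) * R * (-A + e • D)) 0 := by
      fun_prop
    exact (h1.mul hinv).sub continuousAt_const
  · simp [← hR, Matrix.mul_assoc]
  · filter_upwards [hdet.eventually_ne hne] with e he
    have hu : IsUnit (Y - e • A + e ^ 2 • D).det := isUnit_iff_ne_zero.2 he
    set Z := (Y - e • A + e ^ 2 • D)⁻¹ with hZ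
    have key : Z = R - e • (R * (-A + e • D) * Z) := by
      have h1 : (Y - e • A + e ^ 2 • D) * Z = 1 := mul_nonsing_inv _ hu
      have h2 : R * ((Y - e • A + e ^ 2 • D) * Z) = R := by rw [h1, Matrix.mul_one]
      have h3 : R * ((Y - e • A + e ^ 2 • D) * Z) = Z + e • (R * (-A + e • D) * Z) := by
        have : (Y - e • A + e ^ 2 • D) = Y + e • (-A + e • D) := by
          rw [smul_add, smul_smul, smul_neg, pow_two]; abel
        rw [this, Matrix.add_mul, Matrix.mul_add, ← Matrix.mul_assoc R Y, hR,
          nonsing_inv_mul _ hY, Matrix.one_mul, Matrix.smul_mul, Matrix.mul_smul,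
          Matrix.mul_assoc]
      rw [h2] at h3
      exact eq_sub_of_add_eq h3.symm
    have key2 : Z = R - e • (R * (-A + e • D) * (R - e • (R * (-A + e • D) * Z))) := by
      rw [← key]; exact key
    nth_rewrite 1 [key2]
    simp only [smul_sub, smul_add, Matrix.mul_sub, Matrix.mul_add, Matrix.add_mul,
      Matrix.mul_smul, Matrix.smul_mul, smul_smul, Matrix.mul_neg, Matrix.neg_mul, smul_neg,
      Matrix.mul_assoc]
    ring_nf
    abel

lemma pw1_trace {K L : Matrix J J ℝ} (hK : K.PosSemidef) (hL : Lᵀ = L) (p : ℕ) :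
    ∀ r q : ℕ, (pw1 K L (p + 1) * K ^ r * L * K ^ q).trace ≤
      (p + 1 : ℝ) * (K ^ (p + q + r) * L * L).trace := by
  have hb : ∀ a b c : ℕ, (K ^ a * L * K ^ b * L * K ^ c).trace ≤
      (K ^ (a + c + b) * L * L).trace := by
    intro a b c
    rw [Matrix.trace_mul_comm]
    have := trace_rearr hK hL (a + c) b
    refine le_trans (le_of_eq ?_) this
    rw [add_comm a c, pow_add]
    simp only [Matrix.mul_assoc]
  induction p with
  | zero =>
    intro r q
    have := hb 0 r q
    simpa [pw1] using this
  | succ p ih =>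
    intro r q
    rw [pw1, Matrix.add_mul, Matrix.add_mul, Matrix.add_mul, trace_add]
    have h1 := hb (p + 1) r q
    have h2 := ih (r + 1) q
    rw [pow_succ' K r, ← Matrix.mul_assoc] at h2
    rw [show p + q + (r + 1) = p + 1 + q + r by ring] at h2
    push_cast
    linarith

lemma pw2_trace {K L N : Matrix J J ℝ} (hK : K.PosSemidef) (hL : Lᵀ = L) (p : ℕ) :
    ∀ q : ℕ, (pw2 K L N (p + 2) * K ^ q).trace ≤
      (p + 2 : ℝ) * (K ^ (p + 1 + q) * N).trace +
      ((p + 2) * (p + 1) / 2 : ℝ) * (K ^ (p + q) * L * L).trace := by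
  have hb : ∀ a c : ℕ, (K ^ a * N * K ^ c).trace = (K ^ (a + c) * N).trace := by
    intro a c
    rw [Matrix.trace_mul_comm, add_comm a c, pow_add, Matrix.mul_assoc]
  induction p with
  | zero =>
    intro q
    have h1 := hb 1 q
    have h2 := hb 0 (q + 1)
    have h3 : (L * L * K ^ q).trace = (K ^ q * L * L).trace := by
      rw [Matrix.trace_mul_comm, Matrix.mul_assoc]
    simp only [pw2, pw1, Matrix.add_mul, trace_add, pow_zero, pow_one, Matrix.one_mul,
      Matrix.zero_mul, zero_add, add_zero] at *
    rw [pow_succ' K q, ← Matrix.mul_assoc] at h2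
    rw [h1, h3, h2, ← pow_succ', add_comm q 1]
    norm_num
    linarith
  | succ p ih =>
    intro q
    rw [pw2, Matrix.add_mul, Matrix.add_mul, trace_add, trace_add, hb]
    have h1 := pw1_trace hK hL (p + 1) 0 q
    rw [pow_zero, Matrix.mul_one, add_zero] at h1
    have h2 := ih (q + 1)
    rw [pow_succ' K q, ← Matrix.mul_assoc] at h2
    rw [show p + 1 + (q + 1) = p + 1 + 1 + q by ring, show p + (q + 1) = p + 1 + q by ring] at h2
    push_cast at *
    have h1' : (pw1 K L (p + 2) * L * K ^ q).trace ≤ (p + 1 + 1) * (K ^ (p + 1 + q) * L * L).trace := h1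
    linarith
end
end MSp

set_option linter.unusedSectionVars false
set_option linter.unusedVariables false

namespace MSp
open Matrix Filter Topology

section
variable {J : Type*} [Fintype J] [DecidableEq J] {κ : Type*} [Fintype κ]

/-- `∑ B_i S B_i` -/
def W (B : κ → Matrix J J ℝ) (S : Matrix J J ℝ) : Matrix J J ℝ := ∑ i, B i * S * B i

/-- `∑ y_i B_i` -/
def lin (B : κ → Matrix J J ℝ) (y : κ → ℝ) : Matrix J J ℝ := ∑ i, y i • B i

lemma W_add (B : κ → Matrix J J ℝ) (S T : Matrix J J ℝ) : W B (S + T) = W B S + W B T := by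
  simp [W, Matrix.mul_add, Matrix.add_mul, Finset.sum_add_distrib]

lemma W_sub (B : κ → Matrix J J ℝ) (S T : Matrix J J ℝ) : W B (S - T) = W B S - W B T := by
  simp [W, Matrix.mul_sub, Matrix.sub_mul, Finset.sum_sub_distrib]

lemma W_smul (B : κ → Matrix J J ℝ) (c : ℝ) (S : Matrix J J ℝ) : W B (c • S) = c • W B S := by
  simp [W, Finset.smul_sum]

lemma W_sum {ι : Type*} (s : Finset ι) (B : κ → Matrix J J ℝ) (S : ι → Matrix J J ℝ) :
    W B (∑ j ∈ s, S j) = ∑ j ∈ s, W B (S j) := by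
  simp only [W, Finset.mul_sum, Finset.sum_mul]
  exact Finset.sum_comm

lemma W_psd {B : κ → Matrix J J ℝ} (hB : ∀ i, (B i)ᵀ = B i) {S : Matrix J J ℝ}
    (hS : S.PosSemidef) : (W B S).PosSemidef :=
  posSemidef_sum _ fun i _ => psd_conj hS (hB i)

lemma W_symm {B : κ → Matrix J J ℝ} (hB : ∀ i, (B i)ᵀ = B i) (S : Matrix J J ℝ) :
    (W B S)ᵀ = W B Sᵀ := by
  simp [W, transpose_sum, hB, Matrix.mul_assoc]

lemma W_mono {B : κ → Matrix J J ℝ} (hB : ∀ i, (B i)ᵀ = B i) {S T : Matrix J J ℝ}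
    (h : (T - S).PosSemidef) : (W B T - W B S).PosSemidef := by
  rw [← W_sub]; exact W_psd hB h

lemma lin_symm {B : κ → Matrix J J ℝ} (hB : ∀ i, (B i)ᵀ = B i) (y : κ → ℝ) :
    (lin B y)ᵀ = lin B y := by
  simp [lin, transpose_sum, hB]

/-- Bessel property of a family. -/
def Bes {ν : Type*} [Fintype ν] (y : ν → κ → ℝ) : Prop :=
  ∀ q : κ → ℝ, ∑ j, (∑ k, y j k * q k) ^ 2 ≤ ∑ k, q k ^ 2

lemma dot_self (v : J → ℝ) : v ⬝ᵥ v = ∑ a, v a ^ 2 := by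
  simp [dotProduct, pow_two]

lemma bessel_vec {ν : Type*} [Fintype ν] {y : ν → κ → ℝ} (hy : Bes y) (q : κ → J → ℝ) :
    ∑ j, (∑ k, y j k • q k) ⬝ᵥ (∑ k, y j k • q k) ≤ ∑ k, q k ⬝ᵥ q k := by
  simp only [dot_self, Finset.sum_apply, Pi.smul_apply, smul_eq_mul]
  rw [Finset.sum_comm, Finset.sum_comm (s := (Finset.univ : Finset κ))]
  exact Finset.sum_le_sum fun a _ => hy (fun k => q k a)

lemma lin_mulVec (B : κ → Matrix J J ℝ) (y : κ → ℝ) (w : J → ℝ) :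
    lin B y *ᵥ w = ∑ k, y k • (B k *ᵥ w) := by
  simp [lin, sum_mulVec, smul_mulVec]

lemma conj_form {S B : Matrix J J ℝ} (hB : Bᵀ = B) (w : J → ℝ) :
    w ⬝ᵥ (B * S * B) *ᵥ w = (B *ᵥ w) ⬝ᵥ S *ᵥ (B *ᵥ w) := by
  rw [← mulVec_mulVec, ← mulVec_mulVec, dotProduct_mulVec, ← mulVec_transpose, hB]

lemma W_form {B : κ → Matrix J J ℝ} (hB : ∀ i, (B i)ᵀ = B i) {T : Matrix J J ℝ} (hT : Tᵀ = T)
    (w : J → ℝ) : w ⬝ᵥ (W B (T * T)) *ᵥ w = ∑ i, (T *ᵥ (B i *ᵥ w)) ⬝ᵥ (T *ᵥ (B i *ᵥ w)) := by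
  simp only [W, sum_mulVec, dotProduct_sum]
  refine Finset.sum_congr rfl fun i _ => ?_
  rw [conj_form (hB i), sq_form hT]

lemma W_bessel {ν : Type*} [Fintype ν] {y : ν → κ → ℝ} (hy : Bes y)
    {B : κ → Matrix J J ℝ} (hB : ∀ i, (B i)ᵀ = B i) {T : Matrix J J ℝ} (hT : Tᵀ = T) :
    (W B (T * T) - W (fun j => lin B (y j)) (T * T)).PosSemidef := by
  have hTT : (T * T)ᵀ = T * T := by rw [transpose_mul, hT]
  have hL : ∀ j, (lin B (y j))ᵀ = lin B (y j) := fun j => lin_symm hB _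
  refine psd_of ?_ ?_
  · rw [transpose_sub, W_symm hB, W_symm hL, hTT]
  · intro w
    rw [sub_mulVec, dotProduct_sub, W_form hB hT, W_form hL hT, sub_nonneg]
    have := bessel_vec hy (fun k => T *ᵥ (B k *ᵥ w))
    refine le_trans (le_of_eq ?_) this
    refine Finset.sum_congr rfl fun j _ => ?_
    have : T *ᵥ (lin B (y j) *ᵥ w) = ∑ k, y j k • (T *ᵥ (B k *ᵥ w)) := by
      rw [lin_mulVec]
      simp only [← mulVecLin_apply, map_sum, map_smul]
    rw [this]

/-- crossing bound -/
def BM (B : κ → Matrix J J ℝ) (b : ℝ) : Prop :=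
  ∀ (S : Matrix J J ℝ) (s : ℝ), Sᵀ = S → (∀ x : J → ℝ, (S *ᵥ x) ⬝ᵥ (S *ᵥ x) ≤ s * (x ⬝ᵥ x)) →
    ∀ ξ : κ → J → ℝ, ∑ k, (∑ i, B i *ᵥ (S *ᵥ (B k *ᵥ ξ i))) ⬝ᵥ (∑ i, B i *ᵥ (S *ᵥ (B k *ᵥ ξ i)))
      ≤ b ^ 2 * s * ∑ i, ξ i ⬝ᵥ ξ i

lemma BM_bes {ν : Type*} [Fintype ν] {y : ν → κ → ℝ} (hy : Bes y)
    {B : κ → Matrix J J ℝ} {b : ℝ} (hb : BM B b) {S : Matrix J J ℝ} {s : ℝ} (hS : Sᵀ = S)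
    (hs : ∀ x : J → ℝ, (S *ᵥ x) ⬝ᵥ (S *ᵥ x) ≤ s * (x ⬝ᵥ x)) (ξ : κ → J → ℝ) :
    ∑ j, (∑ i, B i *ᵥ (S *ᵥ (lin B (y j) *ᵥ ξ i))) ⬝ᵥ (∑ i, B i *ᵥ (S *ᵥ (lin B (y j) *ᵥ ξ i)))
      ≤ b ^ 2 * s * ∑ i, ξ i ⬝ᵥ ξ i := by
  refine le_trans (le_of_eq ?_)
    ((bessel_vec hy (fun k => ∑ i, B i *ᵥ (S *ᵥ (B k *ᵥ ξ i)))).trans (hb S s hS hs ξ))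
  refine Finset.sum_congr rfl fun j _ => ?_
  have : ∑ i, B i *ᵥ (S *ᵥ (lin B (y j) *ᵥ ξ i)) =
      ∑ k, y j k • ∑ i, B i *ᵥ (S *ᵥ (B k *ᵥ ξ i)) := by
    simp only [Finset.smul_sum]
    rw [Finset.sum_comm]
    refine Finset.sum_congr rfl fun i _ => ?_
    rw [lin_mulVec]
    simp only [← mulVecLin_apply, map_sum, map_smul]
  rw [this]

lemma add_dot_le (u v : J → ℝ) : (u + v) ⬝ᵥ (u + v) ≤ 2 * (u ⬝ᵥ u) + 2 * (v ⬝ᵥ v) := by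
  simp only [dot_self, Finset.mul_sum, ← Finset.sum_add_distrib, Pi.add_apply]
  exact Finset.sum_le_sum fun a _ => by nlinarith [sq_nonneg (u a - v a)]

lemma H1_bound {ν : Type*} [Fintype ν] {y : ν → κ → ℝ} (hy : Bes y)
    {B : κ → Matrix J J ℝ} (hB : ∀ i, (B i)ᵀ = B i) {b : ℝ} (hb : BM B b)
    {R : Matrix J J ℝ} {ρ : ℝ} (hρ : 0 < ρ) (hR : R.PosSemidef)
    (hRρ : (ρ • (1 : Matrix J J ℝ) - R).PosSemidef) :
    ((4 * b ^ 2 * ρ ^ 4) • W B (R * R) -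
      ∑ j, (W B (R * (R * lin B (y j) * R) + R * lin B (y j) * R * R)) *
        (W B (R * (R * lin B (y j) * R) + R * lin B (y j) * R * R))).PosSemidef := by
  have hRs := psd_symm hR
  have hRR : (R * R)ᵀ = R * R := by rw [transpose_mul, hRs]
  have hL : ∀ j, (lin B (y j))ᵀ = lin B (y j) := fun j => lin_symm hB _
  have hHs : ∀ j, (W B (R * (R * lin B (y j) * R) + R * lin B (y j) * R * R))ᵀ =
      W B (R * (R * lin B (y j) * R) + R * lin B (y j) * R * R) := by
    intro j
    rw [W_symm hB]
    congr 1
    simp only [transpose_add, transpose_mul, hL, hRs, Matrix.mul_assoc]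
    abel
  have hn1 := norm_mulVec_le hρ hR hRρ
  have hn2 : ∀ x : J → ℝ, ((R * R) *ᵥ x) ⬝ᵥ ((R * R) *ᵥ x) ≤ ρ ^ 4 * (x ⬝ᵥ x) := by
    intro x
    rw [← mulVec_mulVec]
    calc _ ≤ ρ ^ 2 * ((R *ᵥ x) ⬝ᵥ (R *ᵥ x)) := hn1 _
      _ ≤ ρ ^ 2 * (ρ ^ 2 * (x ⬝ᵥ x)) := by gcongr; exact hn1 x
      _ = _ := by ring
  refine psd_of ?_ ?_
  · rw [transpose_sub, transpose_smul, W_symm hB, hRR, transpose_sum]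
    congr 1
    refine Finset.sum_congr rfl fun j _ => ?_
    rw [transpose_mul, hHs]
  · intro w
    rw [sub_mulVec, dotProduct_sub, smul_mulVec, dotProduct_smul, W_form hB hRs, sub_nonneg,
      sum_mulVec, dotProduct_sum, smul_eq_mul]
    have e : ∀ j, W B (R * (R * lin B (y j) * R) + R * lin B (y j) * R * R) *ᵥ w =
        (∑ i, B i *ᵥ ((R * R) *ᵥ (lin B (y j) *ᵥ (R *ᵥ (B i *ᵥ w))))) +
        (∑ i, B i *ᵥ (R *ᵥ (lin B (y j) *ᵥ ((R * R) *ᵥ (B i *ᵥ w))))) := by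
      intro j
      rw [W_add, add_mulVec, W, W, sum_mulVec, sum_mulVec]
      simp only [mulVec_mulVec, Matrix.mul_assoc]
    have h1 := BM_bes hy hb hRR hn2 (fun i => R *ᵥ (B i *ᵥ w))
    have h2 := BM_bes hy hb hRs hn1 (fun i => (R * R) *ᵥ (B i *ᵥ w))
    have h3 : ∑ i, ((R * R) *ᵥ (B i *ᵥ w)) ⬝ᵥ ((R * R) *ᵥ (B i *ᵥ w)) ≤
        ρ ^ 2 * ∑ i, (R *ᵥ (B i *ᵥ w)) ⬝ᵥ (R *ᵥ (B i *ᵥ w)) := by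
      rw [Finset.mul_sum]
      refine Finset.sum_le_sum fun i _ => ?_
      rw [← mulVec_mulVec]
      exact hn1 _
    have h4 : b ^ 2 * ρ ^ 2 * ∑ i, ((R * R) *ᵥ (B i *ᵥ w)) ⬝ᵥ ((R * R) *ᵥ (B i *ᵥ w)) ≤
        b ^ 2 * ρ ^ 2 * (ρ ^ 2 * ∑ i, (R *ᵥ (B i *ᵥ w)) ⬝ᵥ (R *ᵥ (B i *ᵥ w))) := by
      gcongr
    calc _ = ∑ j, (W B (R * (R * lin B (y j) * R) + R * lin B (y j) * R * R) *ᵥ w) ⬝ᵥ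
          (W B (R * (R * lin B (y j) * R) + R * lin B (y j) * R * R) *ᵥ w) :=
          Finset.sum_congr rfl fun j _ => sq_form (hHs j) w
      _ ≤ ∑ j, (2 * ((∑ i, B i *ᵥ ((R * R) *ᵥ (lin B (y j) *ᵥ (R *ᵥ (B i *ᵥ w))))) ⬝ᵥ
            (∑ i, B i *ᵥ ((R * R) *ᵥ (lin B (y j) *ᵥ (R *ᵥ (B i *ᵥ w)))))) +
            2 * ((∑ i, B i *ᵥ (R *ᵥ (lin B (y j) *ᵥ ((R * R) *ᵥ (B i *ᵥ w))))) ⬝ᵥ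
            (∑ i, B i *ᵥ (R *ᵥ (lin B (y j) *ᵥ ((R * R) *ᵥ (B i *ᵥ w))))))) := by
          refine Finset.sum_le_sum fun j _ => ?_
          rw [e]; exact add_dot_le _ _
      _ ≤ _ := by
          rw [Finset.sum_add_distrib, ← Finset.mul_sum, ← Finset.mul_sum]
          linarith

/-- trivial crossing bound -/
lemma BM_triv {B : κ → Matrix J J ℝ} (hB : ∀ i, (B i)ᵀ = B i) {m : ℝ} (hm : 0 ≤ m)
    (hW : (m • (1 : Matrix J J ℝ) - W B 1).PosSemidef) : BM B m := by
  intro S s hS hs ξ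
  have hform : ∀ w : J → ℝ, ∑ i, (B i *ᵥ w) ⬝ᵥ (B i *ᵥ w) ≤ m * (w ⬝ᵥ w) := by
    intro w
    have h1 := form_le hW w
    have h2 := W_form hB (T := 1) (by simp) w
    rw [Matrix.one_mul] at h2
    rw [h2] at h1
    simpa [smul_mulVec] using h1
  -- row bound
  have hrow : ∀ q : κ → J → ℝ, (∑ i, B i *ᵥ q i) ⬝ᵥ (∑ i, B i *ᵥ q i) ≤ m * ∑ i, q i ⬝ᵥ q i := by
    intro q
    set t := ∑ i, B i *ᵥ q i with ht
    have h1 : t ⬝ᵥ t = ∑ i, (B i *ᵥ t) ⬝ᵥ q i := by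
      conv_lhs => rw [ht]
      rw [sum_dotProduct]
      refine Finset.sum_congr rfl fun i _ => ?_
      rw [dotProduct_comm, dotProduct_mulVec, ← mulVec_transpose, hB]
    have h2 : ∑ i, (B i *ᵥ t) ⬝ᵥ q i = ∑ p : κ × J, (B p.1 *ᵥ t) p.2 * q p.1 p.2 := by
      rw [Fintype.sum_prod_type]; rfl
    have h3 := Finset.sum_mul_sq_le_sq_mul_sq (Finset.univ : Finset (κ × J))
      (fun p => (B p.1 *ᵥ t) p.2) (fun p => q p.1 p.2)
    rw [← h2, ← h1, Fintype.sum_prod_type, Fintype.sum_prod_type] at h3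
    simp only [← dot_self] at h3
    have h4 := hform t
    have hq : 0 ≤ ∑ i, q i ⬝ᵥ q i := Finset.sum_nonneg fun i _ => by
      rw [dot_self]; positivity
    have ht0 : 0 ≤ t ⬝ᵥ t := by rw [dot_self]; positivity
    have h5 : (t ⬝ᵥ t) ^ 2 ≤ (m * (t ⬝ᵥ t)) * ∑ i, q i ⬝ᵥ q i :=
      h3.trans (mul_le_mul_of_nonneg_right h4 hq)
    rcases ht0.eq_or_lt with h0 | h0
    · rw [← h0]; positivity
    · have : (t ⬝ᵥ t) * (t ⬝ᵥ t) ≤ (t ⬝ᵥ t) * (m * ∑ i, q i ⬝ᵥ q i) := by nlinarith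
      exact le_of_mul_le_mul_left this h0
  by_cases hs0 : 0 ≤ s
  · calc _ ≤ ∑ k, m * ∑ i, (S *ᵥ (B k *ᵥ ξ i)) ⬝ᵥ (S *ᵥ (B k *ᵥ ξ i)) :=
          Finset.sum_le_sum fun k _ => hrow _
      _ ≤ ∑ k, m * ∑ i, s * ((B k *ᵥ ξ i) ⬝ᵥ (B k *ᵥ ξ i)) := by
          gcongr with k _ i _; exact hs _
      _ = m * s * ∑ i, ∑ k, ((B k *ᵥ ξ i) ⬝ᵥ (B k *ᵥ ξ i)) := by
          rw [Finset.sum_comm (s := (Finset.univ : Finset κ))]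
          simp only [Finset.mul_sum, mul_assoc]
      _ ≤ m * s * ∑ i, m * (ξ i ⬝ᵥ ξ i) := by
          gcongr with i _; exact hform _
      _ = _ := by rw [← Finset.mul_sum]; ring
  · have hz : ∀ x : J → ℝ, x = 0 := by
      intro x
      have h1 := hs x
      have h2 : 0 ≤ (S *ᵥ x) ⬝ᵥ (S *ᵥ x) := by rw [dot_self]; positivity
      have h3 : 0 ≤ x ⬝ᵥ x := by rw [dot_self]; positivity
      have : x ⬝ᵥ x = 0 := by nlinarith
      exact dotProduct_self_eq_zero.1 this
    have e1 : ∀ k, (∑ i, B i *ᵥ (S *ᵥ (B k *ᵥ ξ i))) = 0 := fun k => hz _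
    have e2 : ∀ k, ξ k = 0 := fun k => hz _
    simp [e1, e2]

/-- crossing bound from the covariance -/
lemma BM_cov {B : κ → Matrix J J ℝ} (hB : ∀ i, (B i)ᵀ = B i) {v : ℝ} (hv : 0 ≤ v)
    (hF : ∀ c : κ → ℝ, ∑ a, ∑ e, (∑ i, c i * B i a e) ^ 2 ≤ v * ∑ i, c i ^ 2) : BM B v := by
  intro S s hS hs ξ
  -- dual bound
  have hdual : ∀ Q : J → J → ℝ, ∑ k, (∑ a, ∑ e, Q a e * B k a e) ^ 2 ≤ v * ∑ a, ∑ e, Q a e ^ 2 := by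
    intro Q
    set c : κ → ℝ := fun k => ∑ a, ∑ e, Q a e * B k a e with hc
    have h1 : ∑ k, c k ^ 2 = ∑ p : J × J, Q p.1 p.2 * (∑ i, c i * B i p.1 p.2) := by
      rw [Fintype.sum_prod_type]
      simp only [Finset.mul_sum]
      calc ∑ k, c k ^ 2 = ∑ k, ∑ a, ∑ e, Q a e * (c k * B k a e) := by
            refine Finset.sum_congr rfl fun k _ => ?_
            rw [pow_two]
            nth_rewrite 2 [hc]
            simp only [Finset.mul_sum]
            refine Finset.sum_congr rfl fun a _ => Finset.sum_congr rfl fun e _ => by ring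
        _ = ∑ a, ∑ k, ∑ e, Q a e * (c k * B k a e) := Finset.sum_comm
        _ = _ := Finset.sum_congr rfl fun a _ => Finset.sum_comm
    have h3 := Finset.sum_mul_sq_le_sq_mul_sq (Finset.univ : Finset (J × J))
      (fun p => Q p.1 p.2) (fun p => ∑ i, c i * B i p.1 p.2)
    rw [← h1, Fintype.sum_prod_type, Fintype.sum_prod_type] at h3
    have h4 := hF c
    have hQ : 0 ≤ ∑ a, ∑ e, Q a e ^ 2 := by positivity
    have hc0 : 0 ≤ ∑ k, c k ^ 2 := by positivity
    change ∑ k, c k ^ 2 ≤ _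
    have h5 : (∑ k, c k ^ 2) ^ 2 ≤ (∑ a, ∑ e, Q a e ^ 2) * (v * ∑ k, c k ^ 2) :=
      h3.trans (mul_le_mul_of_nonneg_left h4 hQ)
    rcases hc0.eq_or_lt with h0 | h0
    · rw [← h0]; positivity
    · have : (∑ k, c k ^ 2) * (∑ k, c k ^ 2) ≤ (∑ k, c k ^ 2) * (v * ∑ a, ∑ e, Q a e ^ 2) := by
        nlinarith
      exact le_of_mul_le_mul_left this h0
  have hBt : ∀ i a e, B i a e = B i e a := fun i a e => congrFun (congrFun (hB i) e) a
  have hSt : ∀ a e, S a e = S e a := fun a e => congrFun (congrFun hS e) a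
  -- Q a f l = ∑_i (S B_i e_a)_f ξ_i l
  set Q : J → J → J → ℝ := fun a f l => ∑ i, (S *ᵥ (fun k => B i k a)) f * ξ i l with hQ
  have e1 : ∀ k a, (∑ i, B i *ᵥ (S *ᵥ (B k *ᵥ ξ i))) a = ∑ f, ∑ l, Q a f l * B k f l := by
    intro k a
    rw [Finset.sum_apply]
    have : ∀ i, (B i *ᵥ (S *ᵥ (B k *ᵥ ξ i))) a =
        ∑ f, ∑ l, (S *ᵥ (fun k => B i k a)) f * ξ i l * B k f l := by
      intro i
      have h1 : (B i *ᵥ (S *ᵥ (B k *ᵥ ξ i))) a =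
          (S *ᵥ (fun k => B i k a)) ⬝ᵥ (B k *ᵥ ξ i) := by
        have : (fun k => B i k a) = B i a := by ext k; exact hBt i k a
        rw [this]
        change B i a ⬝ᵥ (S *ᵥ (B k *ᵥ ξ i)) = _
        rw [dotProduct_mulVec, ← mulVec_transpose, hS]
      rw [h1, dotProduct]
      refine Finset.sum_congr rfl fun f _ => ?_
      have h2 : (B k *ᵥ ξ i) f = ∑ l, B k f l * ξ i l := rfl
      rw [h2, Finset.mul_sum]
      exact Finset.sum_congr rfl fun l _ => by ring
    simp only [this, hQ, Finset.sum_mul]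
    rw [Finset.sum_comm]
    exact Finset.sum_congr rfl fun f _ => Finset.sum_comm
  have e2 : ∀ a l, ∑ f, Q a f l ^ 2 ≤ s * ∑ f, (∑ i, ξ i l * B i f a) ^ 2 := by
    intro a l
    have h1 : (fun f => Q a f l) = S *ᵥ (fun f => ∑ i, ξ i l * B i f a) := by
      ext f
      simp only [hQ, mulVec, dotProduct, Finset.mul_sum, Finset.sum_mul]
      rw [Finset.sum_comm]
      refine Finset.sum_congr rfl fun x _ => Finset.sum_congr rfl fun i _ => by ring
    have h2 := hs (fun f => ∑ i, ξ i l * B i f a)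
    rw [← h1, dot_self, dot_self] at h2
    exact h2
  by_cases hs0 : 0 ≤ s
  · calc _ = ∑ k, ∑ a, (∑ f, ∑ l, Q a f l * B k f l) ^ 2 := by
          refine Finset.sum_congr rfl fun k _ => ?_
          rw [dot_self]
          simp only [e1]
      _ = ∑ a, ∑ k, (∑ f, ∑ l, Q a f l * B k f l) ^ 2 := Finset.sum_comm
      _ ≤ ∑ a, v * ∑ f, ∑ l, Q a f l ^ 2 := Finset.sum_le_sum fun a _ => hdual (Q a)
      _ = v * ∑ a, ∑ l, ∑ f, Q a f l ^ 2 := by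
          rw [← Finset.mul_sum]; congr 1
          exact Finset.sum_congr rfl fun a _ => Finset.sum_comm
      _ ≤ v * ∑ a, ∑ l, s * ∑ f, (∑ i, ξ i l * B i f a) ^ 2 := by
          gcongr with a _ l _; exact e2 a l
      _ = v * s * ∑ l, ∑ f, ∑ a, (∑ i, ξ i l * B i f a) ^ 2 := by
          simp only [← Finset.mul_sum]
          rw [mul_assoc, Finset.sum_comm]
          congr 2
          exact Finset.sum_congr rfl fun a _ => Finset.sum_comm
      _ ≤ v * s * ∑ l, v * ∑ i, ξ i l ^ 2 := by
          gcongr with l _; exact hF (fun i => ξ i l)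
      _ = _ := by
          rw [← Finset.mul_sum, Finset.sum_comm]
          simp only [← dot_self]; ring
  · have hz : ∀ x : J → ℝ, x = 0 := by
      intro x
      have h1 := hs x
      have h2 : 0 ≤ (S *ᵥ x) ⬝ᵥ (S *ᵥ x) := by rw [dot_self]; positivity
      have h3 : 0 ≤ x ⬝ᵥ x := by rw [dot_self]; positivity
      have : x ⬝ᵥ x = 0 := by nlinarith
      exact dotProduct_self_eq_zero.1 this
    have e1 : ∀ k, (∑ i, B i *ᵥ (S *ᵥ (B k *ᵥ ξ i))) = 0 := fun k => hz _
    have e2 : ∀ k, ξ k = 0 := fun k => hz _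
    simp [e1, e2]
end
end MSp

set_option linter.unusedSectionVars false
set_option linter.unusedVariables false

namespace MSp
open Matrix Filter Topology

section
variable {J : Type*} [Fintype J] [DecidableEq J] {κ : Type*} [Fintype κ]

lemma even_dec {ν : Type*} [Fintype ν] {F : ν → ℝ → Matrix J J ℝ} {a : Matrix J J ℝ}
    {b c : ν → Matrix J J ℝ} (hJ : ∀ j, Jet (F j) a (b j) (c j))
    (hs : ∑ j, (c j).trace < 0) :
    ∀ᶠ e in 𝓝 (0 : ℝ), e ≠ 0 → ∃ j, (F j e).trace ≤ a.trace ∨ (F j (-e)).trace ≤ a.trace := by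
  choose h h1 h2 h3 using hJ
  have hneg : Tendsto (fun e : ℝ => -e) (𝓝 0) (𝓝 0) := by
    have : Continuous (fun e : ℝ => -e) := continuous_neg
    simpa using this.tendsto 0
  have hc : ContinuousAt (fun e => ∑ j, ((h j e).trace + (h j (-e)).trace)) 0 := by
    have ht : ∀ j, ContinuousAt (fun e => (h j e).trace) 0 := fun j =>
      (Continuous.matrix_trace continuous_id).continuousAt.comp (h1 j)
    have ht' : ∀ j, ContinuousAt (fun e => (h j (-e)).trace) 0 := fun j => by
      have : ContinuousAt (fun e => (h j e).trace) (-0) := by simpa using ht j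
      exact ContinuousAt.comp (f := fun e : ℝ => -e) (g := fun e => (h j e).trace) this
        continuous_neg.continuousAt
    exact tendsto_finsetSum _ fun j _ => (ht j).add (ht' j)
  have hlt : ∀ᶠ e in 𝓝 (0 : ℝ), ∑ j, ((h j e).trace + (h j (-e)).trace) < 0 := by
    have h0 : ∑ j, ((h j 0).trace + (h j (-0)).trace) < 0 := by
      simp only [neg_zero, h2, Finset.sum_add_distrib]; linarith
    exact hc.eventually_lt continuousAt_const h0
  have h4 : ∀ᶠ e in 𝓝 (0 : ℝ), ∀ j, F j e = a + e • b j + e ^ 2 • h j e :=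
    eventually_all.2 h3
  filter_upwards [h4, hneg.eventually h4, hlt] with e k1 k2 k3 he
  by_contra hcon
  push Not at hcon
  have h5 : ∀ j, 0 ≤ (h j e).trace + (h j (-e)).trace := by
    intro j
    obtain ⟨l1, l2⟩ := hcon j
    rw [k1 j] at l1
    rw [k2 j] at l2
    simp only [trace_add, trace_smul, smul_eq_mul] at l1 l2
    have : 0 < e ^ 2 * ((h j e).trace + (h j (-e)).trace) := by nlinarith
    have he2 : 0 < e ^ 2 := by positivity
    exact (pos_of_mul_pos_right this he2.le).le
  have := Finset.sum_nonneg fun j (_ : j ∈ Finset.univ) => h5 j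
  linarith

/-- The potential. -/
noncomputable def Phi (B : κ → Matrix J J ℝ) (r : ℝ) (p : ℕ) (Y : Matrix J J ℝ) : Matrix J J ℝ :=
  ((100 : ℝ) • W B (Y⁻¹ * Y⁻¹) + (1 / 4 : ℝ) • (1 : Matrix J J ℝ)) ^ p +
    (r • Y⁻¹ + (1 / 4 : ℝ) • (1 : Matrix J J ℝ)) ^ p

lemma Jet.smul' {f : ℝ → Matrix J J ℝ} {a b c : Matrix J J ℝ} (hf : Jet f a b c) (x : ℝ) :
    Jet (fun e => x • f e) (x • a) (x • b) (x • c) := by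
  have := hf.const_mul (x • (1 : Matrix J J ℝ))
  simpa using this

lemma Jet.W {f : ℝ → Matrix J J ℝ} {a b c : Matrix J J ℝ} (hf : Jet f a b c)
    (B : κ → Matrix J J ℝ) :
    Jet (fun e => MSp.W B (f e)) (MSp.W B a) (MSp.W B b) (MSp.W B c) :=
  Jet.sum _ fun i => (hf.const_mul (B i)).mul_const (B i)

lemma Jet.add_const {f : ℝ → Matrix J J ℝ} {a b c : Matrix J J ℝ} (hf : Jet f a b c)
    (x : Matrix J J ℝ) : Jet (fun e => f e + x) (a + x) b c := by
  have := hf.add (Jet.const x)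
  simpa using this

lemma pw2_trace0 {K L N : Matrix J J ℝ} (hK : K.PosSemidef) (hL : Lᵀ = L) (p : ℕ) :
    (pw2 K L N (p + 2)).trace ≤ (p + 2 : ℝ) * (K ^ (p + 1) * N).trace +
      ((p + 2) * (p + 1) / 2 : ℝ) * (K ^ p * (L * L)).trace := by
  have := pw2_trace (N := N) hK hL p 0
  simpa [Matrix.mul_assoc] using this

/-- Generic sum estimate. -/
lemma pw2_sum {ν : Type*} [Fintype ν] {K : Matrix J J ℝ} {L N : ν → Matrix J J ℝ}
    (hK : K.PosSemidef) (hL : ∀ j, (L j)ᵀ = L j) (P : ℕ) {G : Matrix J J ℝ} {s t : ℝ}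
    (hN : (-(s • G) - ∑ j, N j).PosSemidef) (hLL : (t • G - ∑ j, L j * L j).PosSemidef)
    (hKG : (K * G - (1 / 4 : ℝ) • G).PosSemidef) (hs : 0 ≤ s) :
    ∑ j, (pw2 K (L j) (N j) (P + 2)).trace ≤
      (P + 2 : ℝ) * ((P + 1) / 2 * t - s / 4) * (K ^ P * G).trace := by
  have h1 := trace_mul_le (hK.pow (P + 1)) hN
  have h2 := trace_mul_le (hK.pow P) hLL
  have h3 := trace_mul_le (hK.pow P) hKG
  rw [← Matrix.mul_assoc, ← pow_succ] at h3
  simp only [Matrix.mul_neg, Matrix.mul_smul, trace_neg, trace_smul, smul_eq_mul] at h1 h2 h3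
  calc ∑ j, (pw2 K (L j) (N j) (P + 2)).trace
      ≤ ∑ j, ((P + 2 : ℝ) * (K ^ (P + 1) * N j).trace +
      ((P + 2) * (P + 1) / 2 : ℝ) * (K ^ P * (L j * L j)).trace) :=
        Finset.sum_le_sum fun j _ => pw2_trace0 hK (hL j) P
    _ = (P + 2 : ℝ) * (K ^ (P + 1) * ∑ j, N j).trace +
      ((P + 2) * (P + 1) / 2 : ℝ) * (K ^ P * ∑ j, (L j * L j)).trace := by
        simp only [Matrix.mul_sum, trace_sum, Finset.sum_add_distrib, Finset.mul_sum]
    _ ≤ (P + 2 : ℝ) * (-(s * (K ^ (P + 1) * G).trace)) +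
      ((P + 2) * (P + 1) / 2 : ℝ) * (t * (K ^ P * G).trace) := by gcongr
    _ ≤ (P + 2 : ℝ) * (-(s * (1 / 4 * (K ^ P * G).trace))) +
      ((P + 2) * (P + 1) / 2 : ℝ) * (t * (K ^ P * G).trace) := by gcongr
    _ = _ := by ring

lemma step {ν : Type*} [Fintype ν] [Nonempty ν] [Nonempty J] {y : ν → κ → ℝ} (hy : Bes y)
    {B : κ → Matrix J J ℝ} (hB : ∀ i, (B i)ᵀ = B i) {b : ℝ} (hb : BM B b)
    {Y : Matrix J J ℝ} (hY : Y.PosDef) {σ ρ : ℝ} (hσ : 0 < σ) (hρ : 0 < ρ) (P : ℕ)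
    (hρp : ρ * σ = P + 2)
    (hRρ : (ρ • (1 : Matrix J J ℝ) - Y⁻¹).PosSemidef)
    (hHT : ((1 / 100 : ℝ) • (1 : Matrix J J ℝ) - W B (Y⁻¹ * Y⁻¹)).PosSemidef)
    (hcap : (Y⁻¹ - (112 * σ)⁻¹ • (1 : Matrix J J ℝ)).PosSemidef)
    (hp5 : (P + 2) * b ^ 2 * ρ ^ 4 ≤ 1 / 160000)
    {D : Matrix J J ℝ} (hD : D = (Fintype.card ν : ℝ)⁻¹ • W (fun j => lin B (y j)) Y⁻¹ +
      ((Fintype.card ν : ℝ)⁻¹ * σ) • (1 : Matrix J J ℝ)) :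
    ∀ᶠ e in 𝓝 (0 : ℝ), e ≠ 0 → ∃ j,
      (Phi B ρ⁻¹ (P + 2) (Y - e • lin B (y j) + e ^ 2 • D)).trace ≤
        (Phi B ρ⁻¹ (P + 2) Y).trace ∨
      (Phi B ρ⁻¹ (P + 2) (Y - (-e) • lin B (y j) + (-e) ^ 2 • D)).trace ≤
        (Phi B ρ⁻¹ (P + 2) Y).trace := by
  set R := Y⁻¹ with hRdef
  have hR : R.PosDef := hY.inv
  have hRs : Rᵀ = R := psd_symm hR.posSemidef
  have hRR : (R * R)ᵀ = R * R := by rw [transpose_mul, hRs]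
  have hu : IsUnit Y.det := (isUnit_iff_isUnit_det Y).1 hY.isUnit
  set A : ν → Matrix J J ℝ := fun j => lin B (y j) with hA
  have hAs : ∀ j, (A j)ᵀ = A j := fun j => lin_symm hB _
  set H := W B (R * R) with hH
  have hHp : H.PosSemidef := W_psd hB (psd_sq hRs)
  have hN0 : (Fintype.card ν : ℝ) ≠ 0 := by exact_mod_cast Fintype.card_ne_zero
  -- jets
  have j1 : ∀ j, Jet (fun e : ℝ => (Y - e • A j + e ^ 2 • D)⁻¹) R (R * A j * R)
      (R * A j * R * A j * R - R * D * R) := fun j => jet_inv hu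
  set R2 : ν → Matrix J J ℝ := fun j => R * A j * R * A j * R - R * D * R with hR2
  set H1 : ν → Matrix J J ℝ := fun j => W B (R * (R * A j * R) + R * A j * R * R) with hH1
  set H2 : ν → Matrix J J ℝ :=
    fun j => W B (R * R2 j + R * A j * R * (R * A j * R) + R2 j * R) with hH2
  set K1 := (100 : ℝ) • H + (1 / 4 : ℝ) • (1 : Matrix J J ℝ) with hK1
  set K2 := ρ⁻¹ • R + (1 / 4 : ℝ) • (1 : Matrix J J ℝ) with hK2
  have j2 : ∀ j, Jet (fun e : ℝ => Phi B ρ⁻¹ (P + 2) (Y - e • A j + e ^ 2 • D))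
      (K1 ^ (P + 2) + K2 ^ (P + 2))
      (pw1 K1 ((100 : ℝ) • H1 j) (P + 2) + pw1 K2 (ρ⁻¹ • (R * A j * R)) (P + 2))
      (pw2 K1 ((100 : ℝ) • H1 j) ((100 : ℝ) • H2 j) (P + 2) +
        pw2 K2 (ρ⁻¹ • (R * A j * R)) (ρ⁻¹ • R2 j) (P + 2)) := fun j =>
    ((((((j1 j).mul (j1 j)).W B).smul' 100).add_const _).pow (P + 2)).add
      ((((j1 j).smul' ρ⁻¹).add_const _).pow (P + 2))
  refine even_dec j2 ?_
  -- sums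
  have s1 : ∑ j, R2 j = -(σ • (R * R)) := by
    simp only [hR2, Finset.sum_sub_distrib, Finset.sum_const, Finset.card_univ, hD]
    have : ∑ j, R * A j * R * A j * R = R * W A R * R := by
      simp only [W, Finset.mul_sum, Finset.sum_mul, Matrix.mul_assoc]
    rw [this, ← Nat.cast_smul_eq_nsmul ℝ]
    simp only [Matrix.mul_add, Matrix.add_mul, Matrix.mul_smul, Matrix.smul_mul, Matrix.mul_one,
      smul_add, smul_smul]
    rw [← mul_assoc, mul_inv_cancel₀ hN0]
    simp
  have s2 : ∑ j, (R * A j * R) * (R * A j * R) = R * W A (R * R) * R := by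
    simp only [W, Finset.mul_sum, Finset.sum_mul, Matrix.mul_assoc]
  have s3 : ((1 / 100 : ℝ) • (R * R) - R * W A (R * R) * R).PosSemidef := by
    have h1 := (W_bessel hy hB hRs).add hHT
    have h2 := psd_conj h1 hRs
    convert h2 using 1
    simp only [hA, hH, Matrix.mul_add, Matrix.add_mul, Matrix.mul_sub, Matrix.sub_mul,
      Matrix.mul_smul, Matrix.smul_mul, Matrix.mul_one]
    abel
  have s4 : (R * R * R - (112 * σ)⁻¹ • (R * R)).PosSemidef := by
    have h2 := psd_conj hcap hRs
    convert h2 using 1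
    simp only [Matrix.mul_sub, Matrix.sub_mul, Matrix.mul_smul, Matrix.smul_mul, Matrix.mul_one]
  have s5 : (-((1 / 200 : ℝ) • H) - ∑ j, H2 j).PosSemidef := by
    have e1 : ∑ j, H2 j = W B (R * W A (R * R) * R - (2 * σ) • (R * R * R)) := by
      rw [hH2, ← W_sum, ← s2]
      congr 1
      rw [Finset.sum_add_distrib, Finset.sum_add_distrib, ← Finset.mul_sum, ← Finset.sum_mul, s1]
      simp only [Matrix.mul_neg, Matrix.neg_mul, Matrix.mul_smul, Matrix.smul_mul,
        Matrix.mul_assoc, two_mul, add_smul]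
      abel
    rw [e1, hH, ← W_smul, ← neg_one_smul ℝ (W B _), ← W_smul, ← W_sub]
    refine W_psd hB ?_
    have h3 := (s3.add (psd_smul s4 (c := 2 * σ) (by positivity))).add
      (psd_smul (psd_sq hRs) (c := 1 / 56 - 1 / 100 - 1 / 200) (by norm_num))
    convert h3 using 1
    have : 2 * σ * (112 * σ)⁻¹ = 1 / 56 := by field_simp; norm_num
    have h56 : (2 * σ) • ((112 * σ)⁻¹ • (R * R)) = (1 / 56 : ℝ) • (R * R) := by
      rw [smul_smul, this]
    rw [smul_sub, h56]
    module
  have hK1p : K1.PosSemidef := (psd_smul hHp (by norm_num)).add (psd_smul PosSemidef.one (by norm_num))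
  have hK2p : K2.PosSemidef :=
    (psd_smul hR.posSemidef (by positivity)).add (psd_smul PosSemidef.one (by norm_num))
  have hHs : Hᵀ = H := psd_symm hHp
  have hH1s : ∀ j, (H1 j)ᵀ = H1 j := by
    intro j
    rw [hH1]
    simp only
    rw [W_symm hB]
    congr 1
    simp only [transpose_add, transpose_mul, hAs, hRs, Matrix.mul_assoc]
    abel
  -- H part
  have q1 : ∑ j, (pw2 K1 ((100 : ℝ) • H1 j) ((100 : ℝ) • H2 j) (P + 2)).trace ≤ 0 := by
    have h1 : (-((1 / 2 : ℝ) • H) - ∑ j, (100 : ℝ) • H2 j).PosSemidef := by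
      have := psd_smul s5 (c := 100) (by norm_num)
      convert this using 1
      rw [← Finset.smul_sum]; module
    have h2 : ((10000 * (4 * b ^ 2 * ρ ^ 4)) • H -
        ∑ j, ((100 : ℝ) • H1 j) * ((100 : ℝ) • H1 j)).PosSemidef := by
      have := psd_smul (H1_bound hy hB hb hρ hR.posSemidef hRρ) (c := 10000) (by norm_num)
      convert this using 1
      simp only [Matrix.mul_smul, Matrix.smul_mul, smul_smul]
      rw [← Finset.smul_sum, smul_sub, smul_smul]
      norm_num
      rfl
    have h3 : (K1 * H - (1 / 4 : ℝ) • H).PosSemidef := by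
      have := psd_smul (psd_sq hHs) (c := 100) (by norm_num)
      convert this using 1
      rw [hK1, Matrix.add_mul, Matrix.smul_mul, Matrix.smul_mul, Matrix.one_mul]; abel
    refine (pw2_sum hK1p (fun j => by rw [transpose_smul, hH1s]) P h1 h2 h3 (by norm_num)).trans ?_
    have h4 : 0 ≤ (K1 ^ P * H).trace := trace_mul_nonneg (hK1p.pow P) hHp
    have h5 : ((P + 1 : ℝ) / 2 * (10000 * (4 * b ^ 2 * ρ ^ 4)) - 1 / 2 / 4) ≤ 0 := by
      have : 0 ≤ b ^ 2 * ρ ^ 4 := by positivity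
      nlinarith
    exact mul_nonpos_of_nonpos_of_nonneg (mul_nonpos_of_nonneg_of_nonpos (by positivity) h5) h4
  have q2 : ∑ j, (pw2 K2 (ρ⁻¹ • (R * A j * R)) (ρ⁻¹ • R2 j) (P + 2)).trace < 0 := by
    have h1 : (-((ρ⁻¹ * σ) • (R * R)) - ∑ j, ρ⁻¹ • R2 j).PosSemidef := by
      rw [← Finset.smul_sum, s1]
      have : (-((ρ⁻¹ * σ) • (R * R)) - ρ⁻¹ • -(σ • (R * R))) = 0 := by
        rw [smul_neg, smul_smul]; abel
      rw [this]; exact PosSemidef.zero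
    have h2 : ((ρ⁻¹ * ρ⁻¹ * (1 / 100)) • (R * R) -
        ∑ j, (ρ⁻¹ • (R * A j * R)) * (ρ⁻¹ • (R * A j * R))).PosSemidef := by
      have := psd_smul s3 (c := ρ⁻¹ * ρ⁻¹) (by positivity)
      convert this using 1
      simp only [Matrix.mul_smul, Matrix.smul_mul, smul_smul]
      rw [← Finset.smul_sum, smul_sub, smul_smul, s2]
    have h3 : (K2 * (R * R) - (1 / 4 : ℝ) • (R * R)).PosSemidef := by
      have := psd_smul (psd_conj hR.posSemidef hRs) (c := ρ⁻¹) (by positivity)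
      convert this using 1
      rw [hK2, Matrix.add_mul, Matrix.smul_mul, Matrix.smul_mul, Matrix.one_mul, Matrix.mul_assoc]
      abel
    refine (pw2_sum hK2p (fun j => by
      rw [transpose_smul, transpose_mul, transpose_mul, hAs, hRs, Matrix.mul_assoc])
      P h1 h2 h3 (by positivity)).trans_lt ?_
    have h4 : 0 < (K2 ^ P * (R * R)).trace := by
      have hK2d : K2.PosDef := (PosDef.smul PosDef.one (by norm_num : (0:ℝ) < 1 / 4)).posSemidef_add
        (psd_smul hR.posSemidef (by positivity))
      have hpow : (K2 ^ P).PosDef := (hK2p.pow P).posDef_iff_isUnit.2 (hK2d.isUnit.pow P)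
      rw [← Matrix.mul_assoc, Matrix.trace_mul_comm]
      have := hpow.conjTranspose_mul_mul_same (B := R)
        (Matrix.mulVec_injective_of_isUnit hR.isUnit)
      rw [conjTranspose_eq_transpose_of_trivial, hRs] at this
      rw [← Matrix.mul_assoc]
      exact this.trace_pos
    have h5 : ((P + 1 : ℝ) / 2 * (ρ⁻¹ * ρ⁻¹ * (1 / 100)) - ρ⁻¹ * σ / 4) < 0 := by
      have : (P : ℝ) + 1 = ρ * σ - 1 := by linarith
      rw [this]
      have e : (ρ * σ - 1) / 2 * (ρ⁻¹ * ρ⁻¹ * (1 / 100)) - ρ⁻¹ * σ / 4 =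
        ρ⁻¹ * σ * (1 / 200 - 1 / 4) - ρ⁻¹ * ρ⁻¹ / 200 := by field_simp; ring
      rw [e]
      have : 0 < ρ⁻¹ * σ := by positivity
      have : 0 < ρ⁻¹ * ρ⁻¹ := by positivity
      linarith
    exact mul_neg_of_neg_of_pos (mul_neg_of_pos_of_neg (by positivity) h5) h4
  simp only [trace_add, Finset.sum_add_distrib]
  linarith
end
end MSp

set_option linter.unusedSectionVars false
set_option linter.unusedVariables false

namespace MSp
open Matrix Filter Topology

section
variable {J : Type*} [Fintype J] [DecidableEq J] {κ : Type*} [Fintype κ]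

lemma inner_eq (u v : EuclideanSpace ℝ κ) : inner ℝ u v = ∑ k, u k * v k := by
  simp [PiLp.inner_apply, mul_comm]

lemma exists_frame (V : Submodule ℝ (EuclideanSpace ℝ κ)) :
    ∃ y : Fin (Module.finrank ℝ V) → κ → ℝ, Bes y ∧ (∀ j, ∑ k, y j k ^ 2 = 1) ∧
      ∀ j, WithLp.toLp 2 (y j) ∈ V := by
  set bs := stdOrthonormalBasis ℝ V
  have ho : Orthonormal ℝ (fun j => (bs j : EuclideanSpace ℝ κ)) :=
    bs.orthonormal.comp_linearIsometry V.subtypeₗᵢ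
  refine ⟨fun j k => (bs j : EuclideanSpace ℝ κ) k, ?_, ?_, ?_⟩
  · intro q
    have := ho.sum_inner_products_le (s := Finset.univ) (WithLp.toLp 2 q : EuclideanSpace ℝ κ)
    simpa [inner_eq, EuclideanSpace.norm_sq_eq] using this
  · intro j
    have := ho.1 j
    have h2 : ‖(bs j : EuclideanSpace ℝ κ)‖ ^ 2 = 1 := by rw [this]; norm_num
    simpa [EuclideanSpace.norm_sq_eq] using h2
  · intro j
    exact (bs j).2

lemma finrank_perp [DecidableEq κ] (U : Submodule ℝ (EuclideanSpace ℝ κ)) (F : Finset κ)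
    (z : EuclideanSpace ℝ κ) :
    Fintype.card κ ≤ Module.finrank ℝ ((U ⊔ Submodule.span ℝ
        ((F.image fun i => (EuclideanSpace.single i (1:ℝ) : EuclideanSpace ℝ κ)) :
          Set (EuclideanSpace ℝ κ)) ⊔ Submodule.span ℝ {z})ᗮ : Submodule ℝ (EuclideanSpace ℝ κ))
      + Module.finrank ℝ U + F.card + 1 := by
  set A := Submodule.span ℝ ((F.image fun i => (EuclideanSpace.single i (1:ℝ) :
    EuclideanSpace ℝ κ)) : Set (EuclideanSpace ℝ κ))
  set Z := Submodule.span ℝ {z}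
  have h1 := Submodule.finrank_add_finrank_orthogonal (U ⊔ A ⊔ Z)
  have h2 := Submodule.finrank_add_le_finrank_add_finrank (U ⊔ A) Z
  have h3 := Submodule.finrank_add_le_finrank_add_finrank U A
  have h4 : Module.finrank ℝ A ≤ F.card :=
    (finrank_span_finset_le_card _).trans Finset.card_image_le
  have h5 : Module.finrank ℝ Z ≤ 1 := by
    simpa using finrank_span_le_card (R := ℝ) ({z} : Set (EuclideanSpace ℝ κ))
  rw [finrank_euclideanSpace] at h1
  omega

lemma psd_entry {Y : Matrix J J ℝ} {c : ℝ} (hY : Y.PosSemidef)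
    (h : (c • (1 : Matrix J J ℝ) - Y).PosSemidef) (a b : J) : Y a b ∈ Set.Icc (-c) c := by
  have hd : ∀ a, Y a a ≤ c := by
    intro a
    have := h.diag_nonneg (i := a)
    simpa using this
  have hs : Y b a = Y a b := congrFun (congrFun (psd_symm hY) a) b
  have h1 := psd_form hY (Pi.single a 1 + Pi.single b 1)
  have h2 := psd_form hY (Pi.single a 1 - Pi.single b 1)
  simp [mulVec_add, mulVec_sub, add_dotProduct, sub_dotProduct, hs] at h1 h2
  have := hd a
  have := hd b
  constructor <;> linarith

lemma compact_entries (c : ℝ) :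
    IsCompact {Y : Matrix J J ℝ | ∀ a b, Y a b ∈ Set.Icc (-c) c} := by
  have : IsCompact (Set.pi Set.univ (fun _ : J => Set.pi Set.univ
      (fun _ : J => Set.Icc (-c) c))) :=
    isCompact_univ_pi fun _ => isCompact_univ_pi fun _ => isCompact_Icc
  change IsCompact {Y : J → J → ℝ | ∀ a b, Y a b ∈ Set.Icc (-c) c}
  convert this using 1
  ext Y
  simp only [Set.mem_ofPred_eq, Set.mem_pi, Set.mem_univ, true_imp_iff]

lemma closed_psd {X : Type*} [TopologicalSpace X] {f : X → Matrix J J ℝ} (hf : Continuous f) :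
    IsClosed {x | (f x).PosSemidef} := by
  have : {x | (f x).PosSemidef} = {x | (f x)ᵀ = f x} ∩ ⋂ w : J → ℝ, {x | 0 ≤ w ⬝ᵥ f x *ᵥ w} := by
    ext x
    simp only [Set.mem_ofPred_eq, Set.mem_inter_iff, Set.mem_iInter]
    exact ⟨fun h => ⟨psd_symm h, psd_form h⟩, fun h => psd_of h.1 h.2⟩
  rw [this]
  refine (isClosed_eq hf.matrix_transpose hf).inter (isClosed_iInter fun w => ?_)
  refine isClosed_le continuous_const ?_
  fun_prop

lemma symm_bound {S : Matrix J J ℝ} (hS : Sᵀ = S) : ∃ c : ℝ, 0 ≤ c ∧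
    (c • (1 : Matrix J J ℝ) - S).PosSemidef ∧ (c • (1 : Matrix J J ℝ) + S).PosSemidef := by
  obtain ⟨V, l, h, h', hK⟩ := spec hS
  have hl : ∀ k, |l k| ≤ ∑ k, |l k| := fun k =>
    Finset.single_le_sum (f := fun k => |l k|) (fun i _ => abs_nonneg _) (Finset.mem_univ k)
  have e : (∑ k, |l k|) • (1 : Matrix J J ℝ) = V * diagonal (fun _ => ∑ k, |l k|) * Vᵀ := by
    rw [← smul_one_eq_diagonal, Matrix.mul_smul, Matrix.mul_one, Matrix.smul_mul, h']
  refine ⟨∑ k, |l k|, by positivity, ?_, ?_⟩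
  · refine psd_of_spec (V := V) (l := fun k => ∑ k, |l k| - l k) ?_ ?_
    · rw [e, hK, ← Matrix.sub_mul, ← Matrix.mul_sub, diagonal_sub]
    · intro k; have := hl k; have := le_abs_self (l k); linarith
  · refine psd_of_spec (V := V) (l := fun k => ∑ k, |l k| + l k) ?_ ?_
    · rw [e, hK, ← Matrix.add_mul, ← Matrix.mul_add, diagonal_add]
    · intro k; have := hl k; have := neg_abs_le (l k); linarith

lemma posDef_of_ge {Y : Matrix J J ℝ} {c : ℝ} (hc : 0 < c)
    (h : (Y - c • (1 : Matrix J J ℝ)).PosSemidef) : Y.PosDef := by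
  have := (PosDef.smul (PosDef.one (n := J) (R := ℝ)) hc).add_posSemidef h
  simpa using this

lemma Phi_bounds {B : κ → Matrix J J ℝ} (hB : ∀ i, (B i)ᵀ = B i) {Y : Matrix J J ℝ}
    (hY : Y.PosDef) {ρ : ℝ} (hρ : 0 < ρ) {P : ℕ} (h : (Phi B ρ⁻¹ (P + 2) Y).trace ≤ 1) :
    (ρ • (1 : Matrix J J ℝ) - Y⁻¹).PosSemidef ∧
    ((1 / 100 : ℝ) • (1 : Matrix J J ℝ) - W B (Y⁻¹ * Y⁻¹)).PosSemidef := by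
  have hR := hY.inv.posSemidef
  have hH := W_psd hB (psd_sq (psd_symm hR))
  have k1 : ((100 : ℝ) • W B (Y⁻¹ * Y⁻¹) + (1 / 4 : ℝ) • (1 : Matrix J J ℝ)).PosSemidef :=
    (psd_smul hH (by norm_num)).add (psd_smul PosSemidef.one (by norm_num))
  have k2 : (ρ⁻¹ • Y⁻¹ + (1 / 4 : ℝ) • (1 : Matrix J J ℝ)).PosSemidef :=
    (psd_smul hR (by positivity)).add (psd_smul PosSemidef.one (by norm_num))
  have t1 := (k1.pow (P + 2)).trace_nonneg
  have t2 := (k2.pow (P + 2)).trace_nonneg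
  rw [Phi, trace_add] at h
  constructor
  · have h1 := le_one_of_trace_pow k2 (p := P + 2) (by omega) (by linarith)
    have h2 := psd_smul (h1.add (psd_smul PosSemidef.one (by norm_num : (0:ℝ) ≤ 1 / 4))) hρ.le
    convert h2 using 1
    have : ρ • (ρ⁻¹ • Y⁻¹) = Y⁻¹ := by rw [smul_smul, mul_inv_cancel₀ hρ.ne', one_smul]
    simp only [smul_add, smul_sub, this]
    abel
  · have h1 := le_one_of_trace_pow k1 (p := P + 2) (by omega) (by linarith)
    have h2 := psd_smul (h1.add (psd_smul PosSemidef.one (by norm_num : (0:ℝ) ≤ 1 / 4)))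
      (by norm_num : (0 : ℝ) ≤ 1 / 100)
    convert h2 using 1
    module

lemma D_bound {ν : Type*} [Fintype ν] {y : ν → κ → ℝ} (hy : Bes y)
    {B : κ → Matrix J J ℝ} (hB : ∀ i, (B i)ᵀ = B i) {R : Matrix J J ℝ} (hR : R.PosSemidef)
    {σ : ℝ} (hσ : 0 < σ) (hW : (σ ^ 2 • (1 : Matrix J J ℝ) - W B 1).PosSemidef)
    (hHT : ((1 / 100 : ℝ) • (1 : Matrix J J ℝ) - W B (R * R)).PosSemidef) {g G : ℝ} (hg : 0 ≤ g)
    (hgG : g ≤ G) :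
    ((G * (11 / 10 * σ)) • (1 : Matrix J J ℝ) -
      (g • W (fun j => lin B (y j)) R + (g * σ) • (1 : Matrix J J ℝ))).PosSemidef := by
  have hRs := psd_symm hR
  have hA : ∀ j, (lin B (y j))ᵀ = lin B (y j) := fun j => lin_symm hB _
  have b1 := W_bessel hy hB (T := (1 : Matrix J J ℝ)) (by simp)
  rw [Matrix.one_mul] at b1
  have b2 := W_bessel hy hB hRs
  have b3 : ((5 * σ) • (R * R) + (20 * σ)⁻¹ • (1 : Matrix J J ℝ) - R).PosSemidef := by
    have h0 : (R - (10 * σ)⁻¹ • (1 : Matrix J J ℝ))ᵀ = R - (10 * σ)⁻¹ • (1 : Matrix J J ℝ) := by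
      simp [hRs]
    have := psd_smul (psd_sq h0) (c := 5 * σ) (by positivity)
    convert this using 1
    simp only [Matrix.mul_sub, Matrix.sub_mul, Matrix.mul_smul, Matrix.smul_mul, Matrix.mul_one,
      Matrix.one_mul]
    match_scalars <;> field_simp <;> norm_num
  have b4 := W_psd hA b3
  rw [W_sub, W_add, W_smul, W_smul] at b4
  have c1 := psd_smul (b2.add hHT) (c := 5 * σ) (by positivity)
  have c2 := psd_smul (b1.add hW) (c := (20 * σ)⁻¹) (by positivity)
  have c3 := psd_smul ((b4.add c1).add c2) hg
  have c4 := c3.add (psd_smul (PosSemidef.one (n := J) (R := ℝ))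
    (c := (G - g) * (11 / 10 * σ)) (mul_nonneg (by linarith) (by positivity)))
  convert c4 using 1
  match_scalars <;> field_simp <;> ring
end
end MSp

set_option linter.unusedSectionVars false
set_option linter.unusedVariables false

namespace MSp
open Matrix Filter Topology

section
variable {J : Type*} [Fintype J] [DecidableEq J] {κ : Type*} [Fintype κ]

/-- Feasible pairs. -/
def Feas (A B : κ → Matrix J J ℝ) (x0 : κ → ℝ) (σ k0 ρ : ℝ) (P : ℕ) (z : κ → ℝ)
    (Y : Matrix J J ℝ) : Prop :=
  (∀ i, x0 i + z i ∈ Set.Icc (-1 : ℝ) 1) ∧ (Y - ρ⁻¹ • (1 : Matrix J J ℝ)).PosSemidef ∧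
  ((20 * σ + k0 * ∑ i, z i ^ 2) • (1 : Matrix J J ℝ) - (Y + lin A z)).PosSemidef ∧
  (Phi B ρ⁻¹ (P + 2) Y).trace ≤ 1

lemma feas_cap {A B : κ → Matrix J J ℝ} {x0 : κ → ℝ} {σ k0 ρ : ℝ} {P : ℕ} {z : κ → ℝ}
    {Y : Matrix J J ℝ} (hx0 : ∀ i, x0 i ∈ Set.Icc (-1 : ℝ) 1) (hρ : 0 < ρ)
    (hk0 : 0 ≤ k0) (hk : k0 * (4 * Fintype.card κ) ≤ 36 * σ)
    (hsym : ∀ (z : κ → ℝ) (c : ℝ), (c • (1 : Matrix J J ℝ) - lin A z).PosSemidef →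
      (c • (1 : Matrix J J ℝ) + lin A z).PosSemidef)
    (h : Feas A B x0 σ k0 ρ P z Y) :
    ((56 * σ) • (1 : Matrix J J ℝ) - lin A z).PosSemidef ∧
    ((112 * σ) • (1 : Matrix J J ℝ) - Y).PosSemidef ∧ Y.PosDef := by
  obtain ⟨h1, h2, h3, h4⟩ := h
  have hY : Y.PosDef := posDef_of_ge (inv_pos.2 hρ) h2
  have hz : ∑ i, z i ^ 2 ≤ 4 * Fintype.card κ := by
    calc ∑ i, z i ^ 2 ≤ ∑ i : κ, (4 : ℝ) := by
          refine Finset.sum_le_sum fun i _ => ?_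
          have a := h1 i
          have b := hx0 i
          simp only [Set.mem_Icc] at a b
          nlinarith
      _ = _ := by simp [mul_comm]
  have hc : 0 ≤ 56 * σ - (20 * σ + k0 * ∑ i, z i ^ 2) := by
    have := mul_le_mul_of_nonneg_left hz hk0
    linarith
  have g1 := h3.add (psd_smul (PosSemidef.one (n := J) (R := ℝ)) hc)
  have g2 : ((56 * σ) • (1 : Matrix J J ℝ) - lin A z).PosSemidef := by
    convert g1.add hY.posSemidef using 1
    module
  refine ⟨g2, ?_, hY⟩
  convert g1.add (hsym z _ g2) using 1
  module

lemma exists_max {A B : κ → Matrix J J ℝ} {x0 : κ → ℝ} {σ k0 ρ : ℝ} {P : ℕ}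
    (hB : ∀ i, (B i)ᵀ = B i)
    (hx0 : ∀ i, x0 i ∈ Set.Icc (-1 : ℝ) 1) (hρ : 0 < ρ)
    (hk0 : 0 ≤ k0) (hk : k0 * (4 * Fintype.card κ) ≤ 36 * σ)
    (hsym : ∀ (z : κ → ℝ) (c : ℝ), (c • (1 : Matrix J J ℝ) - lin A z).PosSemidef →
      (c • (1 : Matrix J J ℝ) + lin A z).PosSemidef)
    (hne : ∃ z Y, Feas A B x0 σ k0 ρ P z Y) :
    ∃ z Y, Feas A B x0 σ k0 ρ P z Y ∧ ∀ z' Y', Feas A B x0 σ k0 ρ P z' Y' →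
      ∑ i, z' i ^ 2 ≤ ∑ i, z i ^ 2 := by
  set S : Set ((κ → ℝ) × Matrix J J ℝ × Matrix J J ℝ) := {t |
    (∀ i, x0 i + t.1 i ∈ Set.Icc (-1 : ℝ) 1) ∧ (t.2.1 - ρ⁻¹ • (1 : Matrix J J ℝ)).PosSemidef ∧
    ((20 * σ + k0 * ∑ i, t.1 i ^ 2) • (1 : Matrix J J ℝ) - (t.2.1 + lin A t.1)).PosSemidef ∧
    (((100 : ℝ) • W B (t.2.2 * t.2.2) + (1 / 4 : ℝ) • (1 : Matrix J J ℝ)) ^ (P + 2) +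
    (ρ⁻¹ • t.2.2 + (1 / 4 : ℝ) • (1 : Matrix J J ℝ)) ^ (P + 2)).trace ≤ 1 ∧
    t.2.1 * t.2.2 = 1} with hS
  have hinv : ∀ t ∈ S, t.2.1⁻¹ = t.2.2 := fun t ht => Matrix.inv_eq_right_inv ht.2.2.2.2
  have hfeas : ∀ t ∈ S, Feas A B x0 σ k0 ρ P t.1 t.2.1 := by
    intro t ht
    refine ⟨ht.1, ht.2.1, ht.2.2.1, ?_⟩
    rw [Phi, hinv t ht]
    exact ht.2.2.2.1
  have hmem : ∀ z Y, Feas A B x0 σ k0 ρ P z Y → (z, Y, Y⁻¹) ∈ S := by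
    intro z Y h
    have hY := (feas_cap hx0 hρ hk0 hk hsym h).2.2
    exact ⟨h.1, h.2.1, h.2.2.1, h.2.2.2, Matrix.mul_nonsing_inv _
      ((isUnit_iff_isUnit_det Y).1 hY.isUnit)⟩
  have hcl : IsClosed S := by
    have c1 : Continuous (fun t : (κ → ℝ) × Matrix J J ℝ × Matrix J J ℝ => t.1) := continuous_fst
    have c2 : Continuous (fun t : (κ → ℝ) × Matrix J J ℝ × Matrix J J ℝ => t.2.1) := by fun_prop
    have c3 : Continuous (fun t : (κ → ℝ) × Matrix J J ℝ × Matrix J J ℝ => t.2.2) := by fun_prop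
    have d1 : IsClosed {t : (κ → ℝ) × Matrix J J ℝ × Matrix J J ℝ |
        ∀ i, x0 i + t.1 i ∈ Set.Icc (-1 : ℝ) 1} := by
      have : {t : (κ → ℝ) × Matrix J J ℝ × Matrix J J ℝ |
        ∀ i, x0 i + t.1 i ∈ Set.Icc (-1 : ℝ) 1} = ⋂ i, {t | x0 i + t.1 i ∈ Set.Icc (-1 : ℝ) 1} := by
        ext t; simp
      rw [this]
      refine isClosed_iInter fun i => ?_
      exact isClosed_Icc.preimage (f := fun t : (κ → ℝ) × Matrix J J ℝ × Matrix J J ℝ =>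
        x0 i + t.1 i) (by fun_prop)
    have cl : Continuous (fun t : (κ → ℝ) × Matrix J J ℝ × Matrix J J ℝ => lin A t.1) := by
      unfold lin; fun_prop
    have cW : Continuous (fun t : (κ → ℝ) × Matrix J J ℝ × Matrix J J ℝ =>
        W B (t.2.2 * t.2.2)) := by
      unfold W
      exact continuous_finsetSum _ fun i _ =>
        ((continuous_const.matrix_mul (c3.matrix_mul c3)).matrix_mul continuous_const)
    have d2 := closed_psd (f := fun t : (κ → ℝ) × Matrix J J ℝ × Matrix J J ℝ =>
      t.2.1 - ρ⁻¹ • (1 : Matrix J J ℝ)) (by fun_prop)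
    have d3 := closed_psd (f := fun t : (κ → ℝ) × Matrix J J ℝ × Matrix J J ℝ =>
      (20 * σ + k0 * ∑ i, t.1 i ^ 2) • (1 : Matrix J J ℝ) - (t.2.1 + lin A t.1)) (by fun_prop)
    have d4 : IsClosed {t : (κ → ℝ) × Matrix J J ℝ × Matrix J J ℝ |
        (((100 : ℝ) • W B (t.2.2 * t.2.2) + (1 / 4 : ℝ) • (1 : Matrix J J ℝ)) ^ (P + 2) +
        (ρ⁻¹ • t.2.2 + (1 / 4 : ℝ) • (1 : Matrix J J ℝ)) ^ (P + 2)).trace ≤ 1} := by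
      refine isClosed_le (Continuous.matrix_trace ?_) continuous_const
      fun_prop
    have d5 : IsClosed {t : (κ → ℝ) × Matrix J J ℝ × Matrix J J ℝ | t.2.1 * t.2.2 = 1} :=
      isClosed_eq (c2.matrix_mul c3) continuous_const
    exact d1.inter (d2.inter (d3.inter (d4.inter d5)))
  have hK : IsCompact ((Set.univ.pi fun i : κ => Set.Icc (-2 : ℝ) 2) ×ˢ
      ({Y : Matrix J J ℝ | ∀ a b, Y a b ∈ Set.Icc (-(112 * σ)) (112 * σ)} ×ˢ
        {Y : Matrix J J ℝ | ∀ a b, Y a b ∈ Set.Icc (-ρ) ρ})) :=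
    (isCompact_univ_pi fun _ => isCompact_Icc).prod
      ((compact_entries _).prod (compact_entries _))
  have hsub : S ⊆ ((Set.univ.pi fun i : κ => Set.Icc (-2 : ℝ) 2) ×ˢ
      ({Y : Matrix J J ℝ | ∀ a b, Y a b ∈ Set.Icc (-(112 * σ)) (112 * σ)} ×ˢ
        {Y : Matrix J J ℝ | ∀ a b, Y a b ∈ Set.Icc (-ρ) ρ})) := by
    intro t ht
    have hf := hfeas t ht
    obtain ⟨g1, g2, g3⟩ := feas_cap hx0 hρ hk0 hk hsym hf
    refine ⟨?_, ?_, ?_⟩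
    · intro i _
      have a := ht.1 i
      have b := hx0 i
      simp only [Set.mem_Icc] at a b ⊢
      constructor <;> linarith
    · exact fun a b => psd_entry g3.posSemidef g2 a b
    · have := (Phi_bounds hB g3 hρ hf.2.2.2).1
      rw [hinv t ht] at this
      have hp := g3.inv.posSemidef
      rw [hinv t ht] at hp
      exact fun a b => psd_entry hp this a b
  have hSc : IsCompact S := hK.of_isClosed_subset hcl hsub
  obtain ⟨z0, Y0, h0⟩ := hne
  obtain ⟨t, ht, hmax⟩ := hSc.exists_isMaxOn ⟨_, hmem z0 Y0 h0⟩
    (f := fun t => ∑ i, t.1 i ^ 2) (by fun_prop)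
  exact ⟨t.1, t.2.1, hfeas t ht, fun z' Y' h' => hmax (hmem z' Y' h')⟩

lemma feas_init {A B : κ → Matrix J J ℝ} {x0 : κ → ℝ} {σ k0 ρ : ℝ} {P : ℕ}
    (hB : ∀ i, (B i)ᵀ = B i)
    (hx0 : ∀ i, x0 i ∈ Set.Icc (-1 : ℝ) 1) (hσ : 0 < σ) (hρ : 0 < ρ) (hρp : ρ * σ = P + 2)
    (hW : (σ ^ 2 • (1 : Matrix J J ℝ) - W B 1).PosSemidef)
    (hcard : 2 * Fintype.card J ≤ 2 ^ (P + 2)) :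
    Feas A B x0 σ k0 ρ P 0 ((20 * σ) • (1 : Matrix J J ℝ)) := by
  have hρσ : 2 ≤ ρ * σ := by rw [hρp]; linarith [Nat.cast_nonneg (α := ℝ) P]
  have hinv : ((20 * σ) • (1 : Matrix J J ℝ))⁻¹ = (20 * σ)⁻¹ • (1 : Matrix J J ℝ) := by
    apply Matrix.inv_eq_right_inv
    rw [Matrix.smul_mul, Matrix.one_mul, smul_smul, mul_inv_cancel₀ (by positivity), one_smul]
  refine ⟨fun i => by simpa using hx0 i, ?_, ?_, ?_⟩
  · rw [← sub_smul]
    refine psd_smul PosSemidef.one ?_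
    have : ρ⁻¹ ≤ σ := by
      rw [inv_le_iff_one_le_mul₀ hρ]; linarith
    linarith
  · simp [lin, PosSemidef.zero]
  · have ht : ∀ K : Matrix J J ℝ, K.PosSemidef → ((1 / 2 : ℝ) • (1 : Matrix J J ℝ) - K).PosSemidef →
        (K ^ (P + 2)).trace ≤ 1 / 2 := by
      intro K hK h
      refine (trace_pow_le hK (by norm_num) h (P + 2)).trans ?_
      rw [one_div, inv_pow, ← div_eq_mul_inv, div_le_iff₀ (by positivity)]
      have : (2 * Fintype.card J : ℝ) ≤ 2 ^ (P + 2) := by exact_mod_cast hcard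
      linarith
    rw [Phi, trace_add, hinv]
    have hWp : (W B (1 : Matrix J J ℝ)).PosSemidef := W_psd hB PosSemidef.one
    have e1 : W B ((20 * σ)⁻¹ • (1 : Matrix J J ℝ) * (20 * σ)⁻¹ • (1 : Matrix J J ℝ)) =
        ((20 * σ)⁻¹ * (20 * σ)⁻¹) • W B 1 := by
      rw [← W_smul, Matrix.smul_mul, Matrix.one_mul, smul_smul]
    have a1 := ht ((100 : ℝ) • W B ((20 * σ)⁻¹ • (1 : Matrix J J ℝ) * (20 * σ)⁻¹ •
      (1 : Matrix J J ℝ)) + (1 / 4 : ℝ) • (1 : Matrix J J ℝ)) (by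
        rw [e1]
        exact (psd_smul (psd_smul hWp (by positivity)) (by norm_num)).add
          (psd_smul PosSemidef.one (by norm_num))) (by
        rw [e1]
        have := psd_smul hW (c := 100 * ((20 * σ)⁻¹ * (20 * σ)⁻¹)) (by positivity)
        convert this using 1
        match_scalars <;> field_simp <;> norm_num)
    have a2 := ht (ρ⁻¹ • (20 * σ)⁻¹ • (1 : Matrix J J ℝ) + (1 / 4 : ℝ) • (1 : Matrix J J ℝ)) (by
        exact (psd_smul (psd_smul PosSemidef.one (by positivity)) (by positivity)).add
          (psd_smul PosSemidef.one (by norm_num))) (by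
        have hq : ρ⁻¹ * (20 * σ)⁻¹ ≤ 1 / 4 := by
          rw [← mul_inv, one_div]
          exact inv_anti₀ (by norm_num) (by nlinarith)
        have := psd_smul (PosSemidef.one (n := J) (R := ℝ)) (c := 1 / 4 - ρ⁻¹ * (20 * σ)⁻¹)
          (by linarith)
        convert this using 1
        module)
    linarith
end
end MSp

set_option linter.unusedSectionVars false
set_option linter.unusedVariables false

namespace MSp
open Matrix Filter Topology

section
variable {J : Type*} [Fintype J] [DecidableEq J] {κ : Type*} [Fintype κ] [DecidableEq κ]

lemma lin_add_smul (A : κ → Matrix J J ℝ) (z y : κ → ℝ) (e : ℝ) :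
    lin A (fun k => z k + e * y k) = lin A z + e • lin A y := by
  simp only [lin, add_smul, Finset.sum_add_distrib, Finset.smul_sum, smul_smul]

set_option maxHeartbeats 1000000 in
/-- The partial colouring core. -/
theorem core [Nonempty J] {A B : κ → Matrix J J ℝ} {x0 : κ → ℝ} {σ ρ b : ℝ} {P : ℕ}
    (hA : ∀ i, (A i)ᵀ = A i) (hB : ∀ i, (B i)ᵀ = B i) (hb : BM B b)
    (hx0 : ∀ i, x0 i ∈ Set.Icc (-1 : ℝ) 1) (hσ : 0 < σ) (hρ : 0 < ρ) (hρp : ρ * σ = P + 2)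
    (hp5 : (P + 2) * b ^ 2 * ρ ^ 4 ≤ 1 / 160000)
    (hW : (σ ^ 2 • (1 : Matrix J J ℝ) - W B 1).PosSemidef)
    (hcard : 2 * Fintype.card J ≤ 2 ^ (P + 2)) (hm : 16 ≤ Fintype.card κ)
    (hsym : ∀ (z : κ → ℝ) (c : ℝ), (c • (1 : Matrix J J ℝ) - lin A z).PosSemidef →
      (c • (1 : Matrix J J ℝ) + lin A z).PosSemidef)
    (U : Submodule ℝ (EuclideanSpace ℝ κ)) (hU : 2 * Module.finrank ℝ U ≤ Fintype.card κ)
    (hUA : ∀ y : κ → ℝ, WithLp.toLp 2 y ∈ Uᗮ → lin A y = lin B y) :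
    ∃ z : κ → ℝ, (∀ i, x0 i + z i ∈ Set.Icc (-1 : ℝ) 1) ∧
      Fintype.card κ ≤ 4 * (Finset.univ.filter fun i => |x0 i + z i| = 1).card ∧
      ((56 * σ) • (1 : Matrix J J ℝ) - lin A z).PosSemidef := by
  set m : ℝ := (Fintype.card κ : ℝ) with hmdef
  have hm0 : (16 : ℝ) ≤ m := by rw [hmdef]; exact_mod_cast hm
  set k0 : ℝ := (8 / m) * (11 / 10 * σ) with hk0def
  have hk0 : 0 ≤ k0 := by positivity
  have hk : k0 * (4 * Fintype.card κ) ≤ 36 * σ := by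
    rw [← hmdef, hk0def]
    have : 8 / m * (11 / 10 * σ) * (4 * m) = 35.2 * σ := by field_simp; norm_num
    rw [this]; linarith
  obtain ⟨z, Y, hf, hmax⟩ := exists_max (A := A) (P := P) hB hx0 hρ hk0 hk hsym
    ⟨_, _, feas_init hB hx0 hσ hρ hρp hW hcard⟩
  obtain ⟨g1, g2, hY⟩ := feas_cap hx0 hρ hk0 hk hsym hf
  refine ⟨z, hf.1, ?_, g1⟩
  by_contra hcon
  push Not at hcon
  set F := Finset.univ.filter fun i => |x0 i + z i| = 1 with hF
  -- subspace
  have hdim := finrank_perp U F (WithLp.toLp 2 z)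
  set V : Submodule ℝ (EuclideanSpace ℝ κ) := (U ⊔ Submodule.span ℝ
        ((F.image fun i => (EuclideanSpace.single i (1:ℝ) : EuclideanSpace ℝ κ)) :
          Set (EuclideanSpace ℝ κ)) ⊔ Submodule.span ℝ {WithLp.toLp 2 z})ᗮ with hV
  have hN : Fintype.card κ ≤ 8 * Module.finrank ℝ V := by omega
  have hfr := exists_frame V
  obtain ⟨N, hNdef⟩ : ∃ N, N = Module.finrank ℝ V := ⟨_, rfl⟩
  rw [← hNdef] at hfr hN
  obtain ⟨y, hy, hy1, hyV⟩ := hfr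
  have hN0 : 0 < N := by omega
  have : Nonempty (Fin N) := ⟨⟨0, hN0⟩⟩
  have hyU : ∀ j, WithLp.toLp 2 (y j) ∈ Uᗮ := fun j =>
    Submodule.orthogonal_le (le_sup_left.trans le_sup_left) (hyV j)
  have hyF : ∀ j, ∀ i ∈ F, y j i = 0 := by
    intro j i hi
    have h1 : (EuclideanSpace.single i (1:ℝ) : EuclideanSpace ℝ κ) ∈ (U ⊔ Submodule.span ℝ
        ((F.image fun i => (EuclideanSpace.single i (1:ℝ) : EuclideanSpace ℝ κ)) :
          Set (EuclideanSpace ℝ κ)) ⊔ Submodule.span ℝ {WithLp.toLp 2 z}) := by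
      refine Submodule.mem_sup_left (Submodule.mem_sup_right (Submodule.subset_span ?_))
      exact Finset.mem_coe.2 (Finset.mem_image_of_mem _ hi)
    have := (hyV j) _ h1
    rw [inner_eq] at this
    simpa using this
  have hyz : ∀ j, ∑ k, z k * y j k = 0 := by
    intro j
    have h1 : (WithLp.toLp 2 z : EuclideanSpace ℝ κ) ∈ (U ⊔ Submodule.span ℝ
        ((F.image fun i => (EuclideanSpace.single i (1:ℝ) : EuclideanSpace ℝ κ)) :
          Set (EuclideanSpace ℝ κ)) ⊔ Submodule.span ℝ {WithLp.toLp 2 z}) :=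
      Submodule.mem_sup_right (Submodule.mem_span_singleton_self _)
    have := (hyV j) _ h1
    rw [inner_eq] at this
    simpa using this
  have hlin : ∀ j, lin A (y j) = lin B (y j) := fun j => hUA _ (hyU j)
  obtain ⟨p1, p2⟩ := Phi_bounds hB hY hρ hf.2.2.2
  set D : Matrix J J ℝ := (Fintype.card (Fin N) : ℝ)⁻¹ • W (fun j => lin B (y j)) Y⁻¹ +
      ((Fintype.card (Fin N) : ℝ)⁻¹ * σ) • (1 : Matrix J J ℝ) with hD
  have hDk : (k0 • (1 : Matrix J J ℝ) - D).PosSemidef := by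
    refine D_bound hy hB hY.inv.posSemidef hσ hW p2 (by positivity) ?_
    rw [Fintype.card_fin]
    have hNr : m ≤ 8 * N := by rw [hmdef]; exact_mod_cast hN
    have hN0' : (0 : ℝ) < N := by exact_mod_cast hN0
    rw [inv_eq_one_div, div_le_div_iff₀ hN0' (by linarith)]
    linarith
  have hDp : D.PosSemidef :=
    (psd_smul (W_psd (fun j => lin_symm hB _) hY.inv.posSemidef) (by positivity)).add
      (psd_smul PosSemidef.one (by positivity))
  have hstep := step hy hB hb hY hσ hρ P hρp p1 p2 (psd_inv_ge (by positivity) hY g2) hp5 hD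
  -- eventual feasibility
  have hbox : ∀ᶠ e in 𝓝 (0 : ℝ), ∀ j, ∀ i, x0 i + (z i + e * y j i) ∈ Set.Icc (-1 : ℝ) 1 := by
    refine eventually_all.2 fun j => eventually_all.2 fun i => ?_
    by_cases hi : i ∈ F
    · simp only [hyF j i hi, mul_zero, add_zero]
      exact Eventually.of_forall fun _ => hf.1 i
    · have h1 := hf.1 i
      have h2 : |x0 i + z i| ≠ 1 := by simpa [hF] using hi
      have h3 : x0 i + z i ∈ Set.Ioo (-1 : ℝ) 1 := by
        have : |x0 i + z i| < 1 := lt_of_le_of_ne (abs_le.2 h1) h2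
        exact abs_lt.1 this
      have hc : ContinuousAt (fun e : ℝ => x0 i + (z i + e * y j i)) 0 := by fun_prop
      have := hc.eventually_mem (s := Set.Ioo (-1 : ℝ) 1) (isOpen_Ioo.mem_nhds (by simpa using h3))
      exact this.mono fun e he => Set.Ioo_subset_Icc_self he
  have hpd : ∀ᶠ e in 𝓝 (0 : ℝ), ∀ j, (Y - e • lin B (y j) + e ^ 2 • D).PosDef := by
    refine eventually_all.2 fun j => ?_
    obtain ⟨c, hc0, hc1, hc2⟩ := symm_bound (lin_symm hB (y j))
    have hcc : ContinuousAt (fun e : ℝ => |e| * c) 0 := by fun_prop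
    have : ∀ᶠ e in 𝓝 (0 : ℝ), |e| * c < ρ⁻¹ :=
      hcc.eventually_lt continuousAt_const (by simpa using hρ)
    filter_upwards [this] with e he
    refine posDef_of_ge (c := ρ⁻¹ - |e| * c) (by linarith) ?_
    have h1 : ((|e| * c) • (1 : Matrix J J ℝ) - e • lin B (y j)).PosSemidef := by
      rcases le_total 0 e with h | h
      · rw [abs_of_nonneg h]
        convert psd_smul hc1 h using 1; module
      · rw [abs_of_nonpos h]
        convert psd_smul hc2 (neg_nonneg.2 h) using 1; module
    convert (hf.2.1.add h1).add (psd_smul hDp (sq_nonneg e)) using 1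
    module
  have hgood : ∀ᶠ e in 𝓝 (0 : ℝ), ∀ j,
      (∀ i, x0 i + (z i + e * y j i) ∈ Set.Icc (-1 : ℝ) 1) ∧
      (Y - e • lin B (y j) + e ^ 2 • D).PosDef := by
    filter_upwards [hbox, hpd] with e h1 h2 j using ⟨h1 j, h2 j⟩
  -- contradiction from a single good move
  have hfin : ∀ e : ℝ, e ≠ 0 → ∀ j, (∀ i, x0 i + (z i + e * y j i) ∈ Set.Icc (-1 : ℝ) 1) →
      (Y - e • lin B (y j) + e ^ 2 • D).PosDef →
      (Phi B ρ⁻¹ (P + 2) (Y - e • lin B (y j) + e ^ 2 • D)).trace ≤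
        (Phi B ρ⁻¹ (P + 2) Y).trace → False := by
    intro e he j h1 h2 h3
    have hn : ∑ i, (z i + e * y j i) ^ 2 = ∑ i, z i ^ 2 + e ^ 2 := by
      have : ∀ i, (z i + e * y j i) ^ 2 = z i ^ 2 + 2 * e * (z i * y j i) + e ^ 2 * y j i ^ 2 :=
        fun i => by ring
      simp only [this, Finset.sum_add_distrib, ← Finset.mul_sum, hyz, hy1]
      ring
    have h4 := h3.trans hf.2.2.2
    have h5 := Phi_bounds hB h2 hρ h4
    have hfe : Feas A B x0 σ k0 ρ P (fun i => z i + e * y j i)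
        (Y - e • lin B (y j) + e ^ 2 • D) := by
      refine ⟨h1, psd_of_inv_le hρ h2 h5.1, ?_, h4⟩
      rw [hn, lin_add_smul, hlin]
      convert hf.2.2.1.add (psd_smul hDk (sq_nonneg e)) using 1
      module
    have := hmax _ _ hfe
    rw [hn] at this
    have : 0 < e ^ 2 := by positivity
    linarith
  have hneg : Tendsto (fun e : ℝ => -e) (𝓝 0) (𝓝 0) := by
    simpa using (continuous_neg (G := ℝ)).tendsto 0
  have hall := (hstep.and (hgood.and (hneg.eventually hgood)))
  have hall' : ∀ᶠ e in 𝓝[≠] (0 : ℝ), _ := (hall.filter_mono nhdsWithin_le_nhds).and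
    (self_mem_nhdsWithin (s := {(0:ℝ)}ᶜ))
  obtain ⟨e, ⟨k1, k2, k3⟩, k4⟩ := hall'.exists
  have he : e ≠ 0 := k4
  obtain ⟨j, hj | hj⟩ := k1 he
  · exact hfin e he j (k2 j).1 (k2 j).2 hj
  · exact hfin (-e) (neg_ne_zero.2 he) j (k3 j).1 (k3 j).2 hj
end
end MSp

set_option linter.unusedSectionVars false
set_option linter.unusedVariables false

namespace MSp
open Matrix Filter Topology

section
variable {J : Type*} [Fintype J] [DecidableEq J] {κ : Type*} [Fintype κ] [DecidableEq κ]

lemma lin_lin (A : κ → Matrix J J ℝ) (Q : Matrix κ κ ℝ) (hQ : Qᵀ = Q) (c : κ → ℝ) :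
    lin (fun i => lin A (fun k => Q k i)) c = lin A (Q *ᵥ c) := by
  simp only [lin, Finset.smul_sum, smul_smul, mulVec, dotProduct, Finset.sum_smul]
  rw [Finset.sum_comm]
  exact Finset.sum_congr rfl fun i _ => Finset.sum_congr rfl fun k _ => by rw [mul_comm]

lemma project {A : κ → Matrix J J ℝ} (hA : ∀ i, (A i)ᵀ = A i) {F : ℝ} (hF0 : 0 ≤ F)
    (hF : ∀ i, ∑ a, ∑ e, (A i a e) ^ 2 ≤ F) :
    ∃ (B : κ → Matrix J J ℝ) (U : Submodule ℝ (EuclideanSpace ℝ κ)),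
      (∀ i, (B i)ᵀ = B i) ∧ 2 * Module.finrank ℝ U ≤ Fintype.card κ ∧
      (∀ y : κ → ℝ, WithLp.toLp 2 y ∈ Uᗮ → lin A y = lin B y) ∧
      (∀ c : κ → ℝ, ∑ a, ∑ e, (∑ i, c i * B i a e) ^ 2 ≤ 2 * F * ∑ i, c i ^ 2) ∧
      (W A 1 - W B 1).PosSemidef := by
  set G : Matrix κ κ ℝ := fun i k => ∑ a, ∑ e, A i a e * A k a e with hG
  have hGs : Gᵀ = G := by
    ext i k
    simp only [transpose_apply, hG]
    exact Finset.sum_congr rfl fun a _ => Finset.sum_congr rfl fun e _ => mul_comm _ _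
  have hGf : ∀ q : κ → ℝ, q ⬝ᵥ G *ᵥ q = ∑ a, ∑ e, (∑ i, q i * A i a e) ^ 2 := by
    intro q
    have h1 : ∀ a e, (∑ i, q i * A i a e) ^ 2 = ∑ i, ∑ k, q i * (A i a e * A k a e) * q k := by
      intro a e
      rw [pow_two, Finset.sum_mul_sum]
      exact Finset.sum_congr rfl fun a _ => Finset.sum_congr rfl fun e _ => by ring
    simp only [h1, dotProduct, mulVec, hG, Finset.mul_sum, Finset.sum_mul]
    calc _ = ∑ i, ∑ a, ∑ k, ∑ e, q i * (A i a e * A k a e * q k) :=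
          Finset.sum_congr rfl fun i _ => Finset.sum_comm
      _ = ∑ a, ∑ i, ∑ k, ∑ e, q i * (A i a e * A k a e * q k) := Finset.sum_comm
      _ = ∑ a, ∑ i, ∑ e, ∑ k, q i * (A i a e * A k a e * q k) :=
          Finset.sum_congr rfl fun a _ => Finset.sum_congr rfl fun i _ => Finset.sum_comm
      _ = ∑ a, ∑ e, ∑ i, ∑ k, q i * (A i a e * A k a e * q k) :=
          Finset.sum_congr rfl fun a _ => Finset.sum_comm
      _ = _ := by simp only [mul_assoc]
  have hGp : G.PosSemidef := psd_of hGs fun q => by rw [hGf]; positivity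
  obtain ⟨V, l, hV, hV', hGV⟩ := spec hGs
  have hl := spec_psd hV hGV hGp
  have htr : ∑ k, l k ≤ Fintype.card κ * F := by
    have h1 : G.trace = ∑ k, l k := by
      rw [hGV, Matrix.mul_assoc, Matrix.trace_mul_comm, Matrix.mul_assoc, hV]
      simp [trace]
    rw [← h1]
    calc G.trace = ∑ i, ∑ a, ∑ e, (A i a e) ^ 2 := by
            simp only [pow_two]; rfl
      _ ≤ ∑ i : κ, F := Finset.sum_le_sum fun i _ => hF i
      _ = _ := by simp
  set bad := Finset.univ.filter fun k => 2 * F < l k with hbad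
  have hcard : 2 * bad.card ≤ Fintype.card κ := by
    by_contra hcon
    push Not at hcon
    have hne : bad.Nonempty := by
      rw [← Finset.card_pos]; omega
    have h1 : ∑ k ∈ bad, 2 * F < ∑ k ∈ bad, l k :=
      Finset.sum_lt_sum_of_nonempty hne fun k hk => by simpa [hbad] using hk
    have h2 : ∑ k ∈ bad, l k ≤ ∑ k, l k :=
      Finset.sum_le_sum_of_subset_of_nonneg (Finset.subset_univ _) fun k _ _ => hl k
    rw [Finset.sum_const, nsmul_eq_mul] at h1
    have h3 : (2 * bad.card : ℝ) * F < Fintype.card κ * F := by linarith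
    have h4 := lt_of_mul_lt_mul_right h3 hF0
    have : 2 * bad.card < Fintype.card κ := by exact_mod_cast h4
    omega
  set d : κ → ℝ := fun k => if 2 * F < l k then 0 else 1 with hd
  have hd1 : ∀ k, d k * d k = d k := fun k => by simp only [hd]; split_ifs <;> simp
  set Q := V * diagonal d * Vᵀ with hQ
  have hQs : Qᵀ = Q := by simp [hQ, Matrix.mul_assoc]
  have hVq : ∀ q : κ → ℝ, ∑ k, (Vᵀ *ᵥ q) k ^ 2 = ∑ k, q k ^ 2 := by
    intro q
    rw [← dot_self, ← dot_self, dotProduct_mulVec, ← mulVec_transpose, mulVec_mulVec,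
      transpose_transpose, hV', one_mulVec]
  have hform : ∀ (e : κ → ℝ) (q : κ → ℝ), q ⬝ᵥ (V * diagonal e * Vᵀ) *ᵥ q =
      ∑ k, e k * (Vᵀ *ᵥ q) k ^ 2 := by
    intro e q
    rw [← mulVec_mulVec, ← mulVec_mulVec, dotProduct_mulVec, ← mulVec_transpose]
    simp only [dotProduct, mulVec_diagonal]
    exact Finset.sum_congr rfl fun k _ => by ring
  have hmul : ∀ e f : κ → ℝ, (V * diagonal e * Vᵀ) * (V * diagonal f * Vᵀ) =
      V * diagonal (fun k => e k * f k) * Vᵀ := by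
    intro e f
    calc _ = V * diagonal e * (Vᵀ * V) * diagonal f * Vᵀ := by simp only [Matrix.mul_assoc]
      _ = _ := by rw [hV, Matrix.mul_one, Matrix.mul_assoc V, diagonal_mul_diagonal]
  have hQQ : Q * Q = Q := by rw [hQ, hmul]; simp only [hd1]
  have hBes : Bes (fun i k => Q k i) := by
    intro q
    have h1 : ∀ i, ∑ k, Q k i * q k = (Q *ᵥ q) i := by
      intro i
      conv_rhs => rw [← hQs]
      rfl
    simp only [h1]
    rw [← dot_self, ← sq_form hQs, hQQ, hQ, hform, ← hVq]
    refine Finset.sum_le_sum fun k _ => ?_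
    have : d k ≤ 1 := by simp only [hd]; split_ifs <;> simp
    nlinarith [sq_nonneg ((Vᵀ *ᵥ q) k)]
  refine ⟨fun i => lin A (fun k => Q k i), Submodule.span ℝ
    ((bad.image fun k => (WithLp.toLp 2 (fun i => V i k) : EuclideanSpace ℝ κ)) :
      Set (EuclideanSpace ℝ κ)), fun i => lin_symm hA _, ?_, ?_, ?_, ?_⟩
  · have : Module.finrank ℝ (Submodule.span ℝ
      ((bad.image fun k => (WithLp.toLp 2 (fun i => V i k) : EuclideanSpace ℝ κ)) :
      Set (EuclideanSpace ℝ κ))) ≤ bad.card :=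
      (finrank_span_finset_le_card _).trans Finset.card_image_le
    omega
  · intro y hy
    rw [lin_lin _ _ hQs]
    congr 1
    have h1 : ∀ k ∈ bad, (Vᵀ *ᵥ y) k = 0 := by
      intro k hk
      have := hy (WithLp.toLp 2 (fun i => V i k)) (Submodule.subset_span
        (Finset.mem_coe.2 (Finset.mem_image_of_mem _ hk)))
      rw [inner_eq] at this
      simpa [mulVec, dotProduct] using this
    have h2 : diagonal d *ᵥ (Vᵀ *ᵥ y) = Vᵀ *ᵥ y := by
      ext k
      rw [mulVec_diagonal]
      by_cases hk : 2 * F < l k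
      · rw [h1 k (by simpa [hbad] using hk)]; simp
      · simp [hd, hk]
    rw [hQ, ← mulVec_mulVec, ← mulVec_mulVec, h2, mulVec_mulVec, hV', one_mulVec]
  · intro c
    have h1 : ∀ a e, ∑ i, c i * lin A (fun k => Q k i) a e = ∑ i, (Q *ᵥ c) i * A i a e := by
      intro a e
      have h := congrFun (congrFun (lin_lin A Q hQs c) a) e
      simpa [lin, Matrix.sum_apply] using h
    simp only [h1]
    rw [← hGf]
    have h2 : (Q *ᵥ c) ⬝ᵥ G *ᵥ (Q *ᵥ c) = c ⬝ᵥ (Q * G * Q) *ᵥ c := (conj_form hQs c).symm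
    have h3 : Q * G * Q = V * diagonal (fun k => d k * l k * d k) * Vᵀ := by
      rw [hQ, hGV, hmul, hmul]
    rw [h2, h3, hform, ← hVq, Finset.mul_sum]
    refine Finset.sum_le_sum fun k _ => ?_
    refine mul_le_mul_of_nonneg_right ?_ (sq_nonneg _)
    simp only [hd]
    split_ifs with h
    · simp; linarith
    · simp; linarith
  · have := W_bessel hBes hA (T := 1) (by simp)
    rwa [Matrix.one_mul] at this

/-- doubling -/
def dbl {ι : Type*} (X : Matrix ι ι ℝ) : Matrix (ι ⊕ ι) (ι ⊕ ι) ℝ := fromBlocks X 0 0 (-X)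

section
variable {ι : Type*} [Fintype ι] [DecidableEq ι]

lemma dbl_lin (A : κ → Matrix ι ι ℝ) (z : κ → ℝ) :
    lin (fun i => dbl (A i)) z = dbl (lin A z) := by
  ext a b
  rcases a with a | a <;> rcases b with b | b <;>
    simp [lin, dbl, Matrix.sum_apply, fromBlocks]

lemma dbl_swap {X : Matrix ι ι ℝ} {c : ℝ}
    (h : (c • (1 : Matrix (ι ⊕ ι) (ι ⊕ ι) ℝ) - dbl X).PosSemidef) :
    (c • (1 : Matrix (ι ⊕ ι) (ι ⊕ ι) ℝ) + dbl X).PosSemidef := by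
  have := h.submatrix Sum.swap
  convert this using 1
  ext a b
  rcases a with a | a <;> rcases b with b | b <;>
    simp [dbl, fromBlocks, Matrix.one_apply, sub_eq_add_neg]

lemma dbl_ext {X : Matrix ι ι ℝ} {c : ℝ}
    (h : (c • (1 : Matrix (ι ⊕ ι) (ι ⊕ ι) ℝ) - dbl X).PosSemidef) :
    (c • (1 : Matrix ι ι ℝ) - X).PosSemidef ∧ (c • (1 : Matrix ι ι ℝ) + X).PosSemidef := by
  constructor
  · have := h.submatrix Sum.inl
    convert this using 1
    ext a b
    simp [dbl, fromBlocks, Matrix.one_apply]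
  · have := h.submatrix Sum.inr
    convert this using 1
    ext a b
    simp [dbl, fromBlocks, Matrix.one_apply]

lemma block_psd {X Z : Matrix ι ι ℝ} (hX : X.PosSemidef) (hZ : Z.PosSemidef) :
    (fromBlocks X 0 0 Z).PosSemidef := by
  refine psd_of ?_ ?_
  · rw [fromBlocks_transpose, psd_symm hX, psd_symm hZ]; simp
  · intro w
    have h1 := psd_form hX (w ∘ Sum.inl)
    have h2 := psd_form hZ (w ∘ Sum.inr)
    have : w ⬝ᵥ fromBlocks X 0 0 Z *ᵥ w = (w ∘ Sum.inl) ⬝ᵥ X *ᵥ (w ∘ Sum.inl) +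
        (w ∘ Sum.inr) ⬝ᵥ Z *ᵥ (w ∘ Sum.inr) := by
      rw [fromBlocks_mulVec]
      simp [dotProduct, Fintype.sum_sum_type]
    linarith

/-- One phase of partial colouring. -/
theorem phase [Nonempty ι] {A : κ → Matrix ι ι ℝ} {x0 : κ → ℝ} {σ F : ℝ} {P : ℕ}
    (hA : ∀ i, (A i)ᵀ = A i) (hop : ∀ i, ((1 : Matrix ι ι ℝ) - A i * A i).PosSemidef)
    (hF0 : 0 ≤ F) (hF : ∀ i, ∑ a, ∑ e, (A i a e) ^ 2 ≤ F)
    (hx0 : ∀ i, x0 i ∈ Set.Icc (-1 : ℝ) 1) (hσ : 0 < σ)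
    (hmσ : (Fintype.card κ : ℝ) ≤ σ ^ 2)
    (hp5 : 160000 * (P + 2 : ℝ) ^ 5 * (min (4 * F) (Fintype.card κ)) ^ 2 ≤ σ ^ 4)
    (hcard : 4 * Fintype.card ι ≤ 2 ^ (P + 2)) (hm : 16 ≤ Fintype.card κ) :
    ∃ z : κ → ℝ, (∀ i, x0 i + z i ∈ Set.Icc (-1 : ℝ) 1) ∧
      Fintype.card κ ≤ 4 * (Finset.univ.filter fun i => |x0 i + z i| = 1).card ∧
      ((56 * σ) • (1 : Matrix ι ι ℝ) - lin A z).PosSemidef ∧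
      ((56 * σ) • (1 : Matrix ι ι ℝ) + lin A z).PosSemidef := by
  have hAd : ∀ i, (dbl (A i))ᵀ = dbl (A i) := by
    intro i; rw [dbl, fromBlocks_transpose, hA, transpose_neg, hA]; simp
  have hFd : ∀ i, ∑ a, ∑ e, (dbl (A i) a e) ^ 2 ≤ 2 * F := by
    intro i
    have : ∑ a, ∑ e, (dbl (A i) a e) ^ 2 = 2 * ∑ a, ∑ e, (A i a e) ^ 2 := by
      simp [dbl, Fintype.sum_sum_type, two_mul]
    rw [this]; have := hF i; linarith
  obtain ⟨B, U, hB, hU, hUA, hcov, hWAB⟩ := project hAd (by positivity) hFd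
  have hW1 : ((Fintype.card κ : ℝ) • (1 : Matrix (ι ⊕ ι) (ι ⊕ ι) ℝ) - W B 1).PosSemidef := by
    have h1 : ∀ i, ((1 : Matrix (ι ⊕ ι) (ι ⊕ ι) ℝ) - dbl (A i) * 1 * dbl (A i)).PosSemidef := by
      intro i
      have := block_psd (hop i) (hop i)
      convert this using 1
      rw [Matrix.mul_one, dbl, fromBlocks_multiply, ← fromBlocks_one, sub_eq_add_neg, fromBlocks_neg,
        fromBlocks_add]
      simp [sub_eq_add_neg]
    have h2 := posSemidef_sum Finset.univ fun i (_ : i ∈ (Finset.univ : Finset κ)) => h1 i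
    rw [Finset.sum_sub_distrib, Finset.sum_const, Finset.card_univ,
      ← Nat.cast_smul_eq_nsmul ℝ] at h2
    convert h2.add hWAB using 1
    rw [W, W]; abel
  have hb : BM B (min (4 * F) (Fintype.card κ)) := by
    rcases min_choice (4 * F) (Fintype.card κ : ℝ) with h | h
    · rw [h]
      refine BM_cov hB (by positivity) fun c => (hcov c).trans (le_of_eq ?_)
      ring
    · rw [h]; exact BM_triv hB (by positivity) hW1
  have hWσ : (σ ^ 2 • (1 : Matrix (ι ⊕ ι) (ι ⊕ ι) ℝ) - W B 1).PosSemidef := by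
    convert hW1.add (psd_smul (PosSemidef.one (n := ι ⊕ ι) (R := ℝ)) (sub_nonneg.2 hmσ)) using 1
    module
  have hρ : 0 < (P + 2 : ℝ) / σ := by positivity
  obtain ⟨z, h1, h2, h3⟩ := core (A := fun i => dbl (A i)) (P := P) hAd hB hb hx0 hσ hρ
    (by field_simp) (by
      rw [div_pow, ← mul_div_assoc, div_le_div_iff₀ (by positivity) (by norm_num)]
      linarith) hWσ (by rw [Fintype.card_sum]; omega) hm
    (fun z c h => by
      rw [dbl_lin] at h ⊢; exact dbl_swap h) U hU hUA
  rw [dbl_lin] at h3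
  exact ⟨z, h1, h2, dbl_ext h3⟩
end
end
end MSp

set_option linter.unusedSectionVars false
set_option linter.unusedVariables false

namespace MSp
open Matrix Filter Topology

section
variable {ι : Type*} [Fintype ι] [DecidableEq ι]

lemma form_op {A : Matrix ι ι ℝ} (hA : Aᵀ = A) (hop : ((1 : Matrix ι ι ℝ) - A * A).PosSemidef)
    (w : ι → ℝ) : |w ⬝ᵥ A *ᵥ w| ≤ w ⬝ᵥ w := by
  have h1 := psd_form hop w
  rw [Matrix.sub_mulVec, dotProduct_sub, one_mulVec, sq_form hA] at h1
  have h2 : 0 ≤ (w - A *ᵥ w) ⬝ᵥ (w - A *ᵥ w) := by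
    rw [dot_self]; positivity
  have h3 : 0 ≤ (w + A *ᵥ w) ⬝ᵥ (w + A *ᵥ w) := by
    rw [dot_self]; positivity
  simp only [sub_dotProduct, dotProduct_sub, add_dotProduct, dotProduct_add] at h2 h3
  rw [dotProduct_comm (A *ᵥ w) w] at h2 h3
  rw [abs_le]; constructor <;> linarith

lemma lin_form {κ : Type*} [Fintype κ] (A : κ → Matrix ι ι ℝ) (c : κ → ℝ) (w : ι → ℝ) :
    w ⬝ᵥ lin A c *ᵥ w = ∑ i, c i * (w ⬝ᵥ A i *ᵥ w) := by
  rw [lin_mulVec, dotProduct_sum]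
  exact Finset.sum_congr rfl fun i _ => by rw [dotProduct_smul, smul_eq_mul]

lemma lin_crude {κ : Type*} [Fintype κ] {A : κ → Matrix ι ι ℝ} (hA : ∀ i, (A i)ᵀ = A i)
    (hop : ∀ i, ((1 : Matrix ι ι ℝ) - A i * A i).PosSemidef) {c : κ → ℝ} (hc : ∀ i, |c i| ≤ 2)
    (w : ι → ℝ) : |w ⬝ᵥ lin A c *ᵥ w| ≤ 2 * Fintype.card κ * (w ⬝ᵥ w) := by
  rw [lin_form]
  calc _ ≤ ∑ i, |c i * (w ⬝ᵥ A i *ᵥ w)| := Finset.abs_sum_le_sum_abs _ _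
    _ ≤ ∑ i : κ, 2 * (w ⬝ᵥ w) := Finset.sum_le_sum fun i _ => by
        rw [abs_mul]
        exact mul_le_mul (hc i) (form_op (hA i) (hop i) w) (abs_nonneg _) (by norm_num)
    _ = _ := by simp; ring

lemma two_sided {X : Matrix ι ι ℝ} (hX : Xᵀ = X) {c : ℝ} :
    ((c • (1 : Matrix ι ι ℝ) - X).PosSemidef ∧ (c • (1 : Matrix ι ι ℝ) + X).PosSemidef) ↔
      ∀ w : ι → ℝ, |w ⬝ᵥ X *ᵥ w| ≤ c * (w ⬝ᵥ w) := by
  have e1 : ∀ w : ι → ℝ, w ⬝ᵥ (c • (1 : Matrix ι ι ℝ) - X) *ᵥ w = c * (w ⬝ᵥ w) - w ⬝ᵥ X *ᵥ w := by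
    intro w; rw [Matrix.sub_mulVec, dotProduct_sub, smul_mulVec, one_mulVec, dotProduct_smul,
      smul_eq_mul]
  have e2 : ∀ w : ι → ℝ, w ⬝ᵥ (c • (1 : Matrix ι ι ℝ) + X) *ᵥ w = c * (w ⬝ᵥ w) + w ⬝ᵥ X *ᵥ w := by
    intro w; rw [Matrix.add_mulVec, dotProduct_add, smul_mulVec, one_mulVec, dotProduct_smul,
      smul_eq_mul]
  constructor
  · rintro ⟨h1, h2⟩ w
    have a := psd_form h1 w
    have b := psd_form h2 w
    rw [e1] at a; rw [e2] at b
    rw [abs_le]; constructor <;> linarith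
  · intro h
    refine ⟨psd_of (by simp [hX]) fun w => ?_, psd_of (by simp [hX]) fun w => ?_⟩
    · have := abs_le.mp (h w); rw [e1]; linarith
    · have := abs_le.mp (h w); rw [e2]; linarith

theorem induct [Nonempty ι] {F : ℝ} {P N : ℕ} {σ f : ℕ → ℝ} (hF0 : 0 ≤ F)
    (hcard : 4 * Fintype.card ι ≤ 2 ^ (P + 2))
    (hσ : ∀ m : ℕ, 16 ≤ m → m ≤ N → 0 < σ m ∧ (m : ℝ) ≤ σ m ^ 2 ∧
      160000 * (P + 2 : ℝ) ^ 5 * (min (4 * F) m) ^ 2 ≤ σ m ^ 4)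
    (hf : ∀ m : ℕ, 32 ≤ f m)
    (hstep : ∀ m k : ℕ, 16 ≤ m → m ≤ N → 4 * k ≤ 3 * m → 56 * σ m + f k ≤ f m) :
    ∀ m : ℕ, m ≤ N → ∀ (κ : Type) [Fintype κ] [DecidableEq κ], Fintype.card κ = m →
      ∀ (A : κ → Matrix ι ι ℝ) (x0 : κ → ℝ), (∀ i, (A i)ᵀ = A i) →
      (∀ i, ((1 : Matrix ι ι ℝ) - A i * A i).PosSemidef) →
      (∀ i, ∑ a, ∑ e, (A i a e) ^ 2 ≤ F) → (∀ i, x0 i ∈ Set.Icc (-1 : ℝ) 1) →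
      ∃ x : κ → ℝ, (∀ i, x i = 1 ∨ x i = -1) ∧
        ∀ w : ι → ℝ, |w ⬝ᵥ lin A (fun i => x i - x0 i) *ᵥ w| ≤ f m * (w ⬝ᵥ w) := by
  intro m
  induction m using Nat.strong_induction_on with
  | _ m ih =>
  intro hmN κ _ _ hκ A x0 hA hop hF hx0
  have hww : ∀ w : ι → ℝ, 0 ≤ w ⬝ᵥ w := fun w => by rw [dot_self]; positivity
  by_cases hm : m < 16
  · refine ⟨fun _ => 1, fun _ => Or.inl rfl, fun w => ?_⟩
    refine (lin_crude hA hop (fun i => ?_) w).trans ?_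
    · have := hx0 i
      rw [Set.mem_Icc] at this
      rw [abs_le]; constructor <;> linarith
    · refine mul_le_mul_of_nonneg_right ?_ (hww w)
      have : (Fintype.card κ : ℝ) ≤ 16 := by rw [hκ]; exact_mod_cast hm.le
      linarith [hf m]
  push Not at hm
  obtain ⟨h1, h2, h3⟩ := hσ m hm hmN
  obtain ⟨z, hz, hfro, hp1, hp2⟩ := phase (ι := ι) (κ := κ) (A := A) (x0 := x0) (σ := σ m) (F := F)
    (P := P) hA hop hF0 hF hx0 h1 (by rw [hκ]; exact h2) (by rw [hκ]; exact h3) hcard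
    (by rw [hκ]; exact hm)
  have hzw := (two_sided (lin_symm hA z)).mp ⟨hp1, hp2⟩
  set x1 : κ → ℝ := fun i => x0 i + z i with hx1
  set k := Fintype.card {i : κ // ¬ |x1 i| = 1} with hk
  have hkm : k + (Finset.univ.filter fun i => |x0 i + z i| = 1).card = m := by
    rw [hk, Fintype.card_subtype, ← hκ, ← Finset.card_univ, add_comm]
    exact Finset.card_filter_add_card_filter_not _
  have h4k : 4 * k ≤ 3 * m := by rw [hκ] at hfro; omega
  obtain ⟨x', hx', hw'⟩ := ih k (by omega) (by omega) {i : κ // ¬ |x1 i| = 1} rfl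
    (fun i => A i) (fun i => x1 i) (fun i => hA i) (fun i => hop i) (fun i => hF i)
    (fun i => hz i)
  refine ⟨fun i => if h : ¬ |x1 i| = 1 then x' ⟨i, h⟩ else x1 i, fun i => ?_, fun w => ?_⟩
  · by_cases h : |x1 i| = 1
    · simp only [h, not_true_eq_false, dite_false]
      exact (abs_eq (by norm_num)).mp h
    · simp only [h, not_false_eq_true, dite_true]
      exact hx' _
  · have e : w ⬝ᵥ lin A (fun i => (if h : ¬ |x1 i| = 1 then x' ⟨i, h⟩ else x1 i) - x0 i) *ᵥ w
        = w ⬝ᵥ lin A z *ᵥ w +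
          w ⬝ᵥ lin (fun i : {i : κ // ¬ |x1 i| = 1} => A i) (fun i => x' i - x1 i) *ᵥ w := by
      rw [lin_form, lin_form, lin_form]
      have e2 : ∑ i : {i : κ // ¬ |x1 i| = 1}, (x' i - x1 i) * (w ⬝ᵥ A i *ᵥ w) =
          ∑ i : κ, ((if h : ¬ |x1 i| = 1 then x' ⟨i, h⟩ else x1 i) - x1 i) * (w ⬝ᵥ A i *ᵥ w) := by
        rw [← Finset.sum_filter_of_ne (p := fun i => ¬ |x1 i| = 1),
          ← Finset.sum_subtype_eq_sum_filter]
        · simp only [Finset.subtype_univ]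
          refine Finset.sum_congr rfl fun i _ => ?_
          rw [dif_pos i.2]
        · intro i _ hne hc
          apply hne
          simp [hc]
      rw [e2, ← Finset.sum_add_distrib]
      refine Finset.sum_congr rfl fun i _ => ?_
      simp only [hx1]; ring
    rw [e]
    calc _ ≤ _ := abs_add_le _ _
      _ ≤ 56 * σ m * (w ⬝ᵥ w) + f k * (w ⬝ᵥ w) := add_le_add (hzw w) (hw' w)
      _ = (56 * σ m + f k) * (w ⬝ᵥ w) := by ring
      _ ≤ _ := mul_le_mul_of_nonneg_right (hstep m k hm hmN h4k) (hww w)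

end
end MSp

set_option linter.unusedSectionVars false
set_option linter.unusedVariables false

namespace MSp
open Matrix Filter Topology

section

lemma log_ge {n : ℕ} (hn : 2 ≤ n) : (0.69 : ℝ) ≤ Real.log n := by
  have h1 : Real.log 2 ≤ Real.log n := Real.log_le_log (by norm_num) (by exact_mod_cast hn)
  have := Real.log_two_gt_d9
  linarith

lemma choose_p {n : ℕ} (hn : 2 ≤ n) : ∃ P : ℕ, (P + 2 : ℝ) ≤ 12 * Real.log n ∧
    16 * n ^ 2 ≤ 2 ^ (P + 2) := by
  have hL := log_ge hn
  set L := Real.log n with hLd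
  have h7 : 6 < ⌈10 * L⌉₊ := by
    rw [Nat.lt_ceil]; push_cast; linarith
  refine ⟨⌈10 * L⌉₊ - 2, ?_, ?_⟩
  · have h1 : ((⌈10 * L⌉₊ - 2 : ℕ) : ℝ) + 2 = (⌈10 * L⌉₊ : ℝ) := by
      rw [Nat.cast_sub (by omega)]; push_cast; ring
    rw [h1]
    have := Nat.ceil_lt_add_one (a := 10 * L) (by linarith)
    linarith
  · have h1 : ⌈10 * L⌉₊ - 2 + 2 = ⌈10 * L⌉₊ := by omega
    rw [h1]
    have h2 : n ^ 6 ≤ 2 ^ ⌈10 * L⌉₊ := by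
      have : ((n : ℝ) ^ 6) ≤ (2 : ℝ) ^ ⌈10 * L⌉₊ := by
        have hn0 : (0 : ℝ) < n := by exact_mod_cast (by omega : 0 < n)
        rw [← Real.log_le_log_iff (by positivity) (by positivity), Real.log_pow, Real.log_pow]
        have := Nat.le_ceil (10 * L)
        have h2 := Real.log_two_gt_d9
        push_cast
        have h3 : (0.69 : ℝ) * (10 * L) ≤ Real.log 2 * ⌈10 * L⌉₊ :=
          mul_le_mul (by linarith) this (by linarith) (by linarith)
        linarith
      exact_mod_cast this
    have h3 : 2 ^ 4 ≤ n ^ 4 := Nat.pow_le_pow_left hn 4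
    calc 16 * n ^ 2 ≤ n ^ 4 * n ^ 2 := Nat.mul_le_mul_right _ (by simpa using h3)
      _ = n ^ 6 := by ring
      _ ≤ _ := h2

/-- the twelfth root of `m / n` -/
noncomputable def tr (n m : ℕ) : ℝ := ((m : ℝ) / n) ^ ((1 : ℝ) / 12)

lemma tr_pow (n m : ℕ) : tr n m ^ 12 = (m : ℝ) / n := by
  unfold tr
  rw [← Real.rpow_natCast, ← Real.rpow_mul (by positivity)]
  norm_num

lemma tr_nonneg (n m : ℕ) : 0 ≤ tr n m := by unfold tr; positivity

variable {ι : Type*} [Fintype ι] [DecidableEq ι]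

theorem core_small [Nonempty ι] {n : ℕ} (hn : 2 ≤ n) (hι : Fintype.card ι ≤ 4 * n ^ 2)
    (A : Fin n → Matrix ι ι ℝ) (hA : ∀ i, (A i)ᵀ = A i)
    (hop : ∀ i, ((1 : Matrix ι ι ℝ) - A i * A i).PosSemidef)
    (hF : ∀ i, ∑ a, ∑ e, (A i a e) ^ 2 ≤ (n : ℝ) / Real.log n ^ 3) :
    ∃ x : Fin n → ℝ, (∀ i, x i = 1 ∨ x i = -1) ∧
      ∀ w : ι → ℝ, |w ⬝ᵥ lin A x *ᵥ w| ≤ 2688032 * √(n : ℝ) * (w ⬝ᵥ w) := by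
  obtain ⟨P, hP1, hP2⟩ := choose_p hn
  have hL := log_ge hn
  set L := Real.log n with hLd
  have hL0 : 0 < L := by linarith
  have hn0 : (0 : ℝ) < n := by exact_mod_cast (by omega : 0 < n)
  have hs1 : (1 : ℝ) ≤ √(n : ℝ) := by
    rw [Real.one_le_sqrt]; exact_mod_cast (by omega : 1 ≤ n)
  have hsq : √(n : ℝ) ^ 2 = n := Real.sq_sqrt hn0.le
  have hs0 : 0 < √(n : ℝ) := by linarith
  have hyp1 : ∀ m : ℕ, 16 ≤ m → m ≤ n → 0 < 1000 * √(n : ℝ) * tr n m ∧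
      (m : ℝ) ≤ (1000 * √(n : ℝ) * tr n m) ^ 2 ∧
      160000 * (P + 2 : ℝ) ^ 5 * (min (4 * ((n : ℝ) / L ^ 3)) (m : ℝ)) ^ 2
        ≤ (1000 * √(n : ℝ) * tr n m) ^ 4 := by
    intro m hm hmn
    set t := tr n m with ht
    have hm0 : (0 : ℝ) < m := by exact_mod_cast (by omega : 0 < m)
    have ht0 : 0 < t := by rw [ht]; unfold tr; positivity
    have ht12 : (m : ℝ) = n * t ^ 12 := by rw [ht, tr_pow]; field_simp
    have ht1 : t ≤ 1 := by
      rw [ht]; unfold tr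
      apply Real.rpow_le_one (by positivity) _ (by norm_num)
      rw [div_le_one hn0]; exact_mod_cast hmn
    refine ⟨by positivity, ?_, ?_⟩
    · have h1 : t ^ 12 ≤ t ^ 2 := pow_le_pow_of_le_one ht0.le ht1 (by norm_num)
      calc (m : ℝ) = n * t ^ 12 := ht12
        _ ≤ n * t ^ 2 := by gcongr
        _ ≤ 1000000 * (n * t ^ 2) := by nlinarith [mul_pos hn0 (pow_pos ht0 2)]
        _ = 1000000 * (√(n : ℝ) ^ 2 * t ^ 2) := by rw [hsq]
        _ = _ := by ring
    · set b := min (4 * ((n : ℝ) / L ^ 3)) (m : ℝ) with hb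
      have hb0 : 0 ≤ b := le_min (by positivity) hm0.le
      have hb1 : b ≤ 4 * (n / L ^ 3) := min_le_left _ _
      have hb2 : b ≤ n * t ^ 12 := by rw [← ht12]; exact min_le_right _ _
      have h6 : b ^ 6 ≤ (4 * (n / L ^ 3)) ^ 5 * (n * t ^ 12) := by
        rw [pow_succ]; gcongr
      have hc : (L ^ 5 * b ^ 2) ^ 3 ≤ (11 * n ^ 2 * t ^ 4) ^ 3 := by
        calc (L ^ 5 * b ^ 2) ^ 3 = L ^ 15 * b ^ 6 := by ring
          _ ≤ L ^ 15 * ((4 * (n / L ^ 3)) ^ 5 * (n * t ^ 12)) := by gcongr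
          _ = 1024 * (n ^ 6 * t ^ 12) := by field_simp; ring
          _ ≤ 1331 * (n ^ 6 * t ^ 12) := by
              have : (0 : ℝ) < n ^ 6 * t ^ 12 := by positivity
              linarith
          _ = _ := by ring
      have hd : L ^ 5 * b ^ 2 ≤ 11 * n ^ 2 * t ^ 4 :=
        le_of_pow_le_pow_left₀ (by norm_num) (by positivity) hc
      have hp5 : ((P : ℝ) + 2) ^ 5 ≤ (12 * L) ^ 5 := by gcongr
      calc 160000 * ((P : ℝ) + 2) ^ 5 * b ^ 2 ≤ 160000 * (12 * L) ^ 5 * b ^ 2 := by gcongr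
        _ = 160000 * 248832 * (L ^ 5 * b ^ 2) := by ring
        _ ≤ 160000 * 248832 * (11 * n ^ 2 * t ^ 4) := by gcongr
        _ ≤ 1000000000000 * (n ^ 2 * t ^ 4) := by
            have : (0 : ℝ) < n ^ 2 * t ^ 4 := by positivity
            linarith
        _ = 1000000000000 * ((√(n : ℝ) ^ 2) ^ 2 * t ^ 4) := by rw [hsq]
        _ = _ := by ring
  have hyp2 : ∀ m : ℕ, 32 ≤ 2688000 * √(n : ℝ) * tr n m + 32 := by
    intro m
    have := tr_nonneg n m
    have : 0 ≤ 2688000 * √(n : ℝ) * tr n m := by positivity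
    linarith
  have hyp3 : ∀ m k : ℕ, 16 ≤ m → m ≤ n → 4 * k ≤ 3 * m →
      56 * (1000 * √(n : ℝ) * tr n m) + (2688000 * √(n : ℝ) * tr n k + 32)
        ≤ 2688000 * √(n : ℝ) * tr n m + 32 := by
    intro m k hm hmn hk
    have h1 : tr n k ≤ 47 / 48 * tr n m := by
      refine le_of_pow_le_pow_left₀ (n := 12) (by norm_num)
        (mul_nonneg (by norm_num) (tr_nonneg n m)) ?_
      rw [mul_pow, tr_pow, tr_pow]
      have h2 : (4 : ℝ) * k ≤ 3 * m := by exact_mod_cast hk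
      calc (k : ℝ) / n ≤ (3 / 4 * m) / n := by gcongr; linarith
        _ = 3 / 4 * (m / n) := by ring
        _ ≤ _ := by gcongr; norm_num
    have h2 : 2688000 * √(n : ℝ) * tr n k ≤ 2688000 * √(n : ℝ) * (47 / 48 * tr n m) := by gcongr
    have h3 : 0 ≤ √(n : ℝ) * tr n m := mul_nonneg hs0.le (tr_nonneg n m)
    show 56 * (1000 * √(n : ℝ) * tr n m) + (2688000 * √(n : ℝ) * tr n k + 32) ≤ 2688000 * √(n : ℝ) * tr n m + 32
    linarith
  obtain ⟨x, hx, hw⟩ := induct (ι := ι) (F := n / L ^ 3) (P := P) (N := n)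
    (σ := fun m : ℕ => 1000 * √(n : ℝ) * tr n m) (f := fun m : ℕ => 2688000 * √(n : ℝ) * tr n m + 32)
    (by positivity) (by omega) hyp1 hyp2 hyp3 n le_rfl (Fin n) (by simp) A (fun _ => 0) hA hop hF
    (fun i => by constructor <;> norm_num)
  · refine ⟨x, hx, fun w => ?_⟩
    have h := hw w
    have e : (fun i => x i - 0) = x := by ext i; simp
    rw [e] at h
    refine h.trans (mul_le_mul_of_nonneg_right ?_ (by rw [dot_self]; positivity))
    have : tr n n = 1 := by unfold tr; rw [div_self hn0.ne', Real.one_rpow]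
    rw [this]
    linarith

end
end MSp

set_option linter.unusedSectionVars false
set_option linter.unusedVariables false

namespace MSp
open Matrix Filter Topology

section
variable {J : Type*} [Fintype J] [DecidableEq J]

lemma dot_nonneg' (w : J → ℝ) : 0 ≤ w ⬝ᵥ w := by rw [dot_self]; positivity

lemma frob_trace {A : Matrix J J ℝ} (hA : Aᵀ = A) :
    ∑ a, ∑ e, (A a e) ^ 2 = (A * A).trace := by
  simp only [trace, diag_apply, mul_apply]
  refine Finset.sum_congr rfl fun a _ => Finset.sum_congr rfl fun e _ => ?_
  have : A e a = A a e := congrFun (congrFun hA a) e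
  rw [this, pow_two]

lemma dot_amgm (y z : J → ℝ) {s : ℝ} (hs : 0 < s) :
    2 * |y ⬝ᵥ z| ≤ s * (y ⬝ᵥ y) + s⁻¹ * (z ⬝ᵥ z) := by
  have h1 := dot_nonneg' (s • y - z)
  have h2 := dot_nonneg' (s • y + z)
  simp only [sub_dotProduct, dotProduct_sub, add_dotProduct, dotProduct_add, smul_dotProduct,
    dotProduct_smul, smul_eq_mul, dotProduct_comm z y] at h1 h2
  have e : s * (y ⬝ᵥ y) + s⁻¹ * (z ⬝ᵥ z) = s⁻¹ * (s * (s * (y ⬝ᵥ y)) + z ⬝ᵥ z) := by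
    field_simp
  have h3 : 2 * |s * (y ⬝ᵥ z)| ≤ s * (s * (y ⬝ᵥ y)) + z ⬝ᵥ z := by
    rcases abs_cases (s * (y ⬝ᵥ z)) with h | h <;> linarith
  rw [e, abs_mul, abs_of_pos hs] at *
  rw [le_inv_mul_iff₀ hs]
  linarith

theorem reduce_diag {n : ℕ} (hn : 2 ≤ n) (B : Fin n → Matrix J J ℝ) (hB : ∀ i, (B i)ᵀ = B i)
    (hop : ∀ i, ((1 : Matrix J J ℝ) - B i * B i).PosSemidef)
    (hF : ∀ i, ∑ a, ∑ e, (B i a e) ^ 2 ≤ (n : ℝ) / Real.log n ^ 3)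
    (l : J → ℝ) (hl : ∑ i, B i * B i = diagonal l) :
    ∃ x : Fin n → ℝ, (∀ i, x i = 1 ∨ x i = -1) ∧
      ∀ u : J → ℝ, |u ⬝ᵥ lin B x *ᵥ u| ≤ 2688035 * √(n : ℝ) * (u ⬝ᵥ u) := by
  classical
  have hL := log_ge hn
  have hn0 : (0 : ℝ) < n := by exact_mod_cast (by omega : 0 < n)
  have hs0 : 0 < √(n : ℝ) := Real.sqrt_pos.mpr hn0
  have hsq : √(n : ℝ) * √(n : ℝ) = n := Real.mul_self_sqrt hn0.le
  have hl0 : ∀ k, 0 ≤ l k := by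
    intro k
    have h1 : (diagonal l).PosSemidef := by
      rw [← hl]; exact posSemidef_sum _ fun i _ => psd_sq (hB i)
    simpa using h1.diag_nonneg (i := k)
  have hcard : Fintype.card {k : J // 1 < l k} ≤ 4 * n ^ 2 := by
    have h1 : ∑ k, l k ≤ 4 * (n : ℝ) ^ 2 := by
      have e : ∑ k, l k = ∑ i, ∑ a, ∑ e, (B i a e) ^ 2 := by
        calc ∑ k, l k = (diagonal l).trace := by simp [trace]
          _ = ∑ i, (B i * B i).trace := by rw [← hl, trace_sum]
          _ = _ := Finset.sum_congr rfl fun i _ => (frob_trace (hB i)).symm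
      rw [e]
      calc _ ≤ ∑ i : Fin n, (n : ℝ) / Real.log n ^ 3 := Finset.sum_le_sum fun i _ => hF i
        _ = n * (n / Real.log n ^ 3) := by simp
        _ ≤ n * (4 * n) := by
            gcongr
            rw [div_le_iff₀ (by positivity)]
            have h3 : (0.69 : ℝ) ^ 3 ≤ Real.log n ^ 3 := by gcongr
            norm_num at h3
            nlinarith
        _ = _ := by ring
    have h2 : (Fintype.card {k : J // 1 < l k} : ℝ) ≤ ∑ k, l k := by
      rw [Fintype.card_subtype]
      calc ((Finset.univ.filter fun k => 1 < l k).card : ℝ)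
          = ∑ k ∈ Finset.univ.filter (fun k => 1 < l k), (1 : ℝ) := by simp
        _ ≤ ∑ k ∈ Finset.univ.filter (fun k => 1 < l k), l k :=
            Finset.sum_le_sum fun k hk => (Finset.mem_filter.mp hk).2.le
        _ ≤ _ := Finset.sum_le_sum_of_subset_of_nonneg (Finset.filter_subset _ _)
            fun k _ _ => hl0 k
    exact_mod_cast h2.trans h1
  -- extension by zero
  set ext : ({k : J // 1 < l k} → ℝ) → J → ℝ := fun w k => if h : 1 < l k then w ⟨k, h⟩ else 0
    with hext
  have ext_sum : ∀ (w : {k : J // 1 < l k} → ℝ) (g : J → ℝ),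
      ∑ k, ext w k * g k = ∑ k : {k : J // 1 < l k}, w k * g k := by
    intro w g
    rw [← Finset.sum_filter_of_ne (p := fun k => 1 < l k), ← Finset.sum_subtype_eq_sum_filter]
    · simp only [Finset.subtype_univ]
      refine Finset.sum_congr rfl fun k _ => ?_
      simp only [hext]
      rw [dif_pos k.2]
    · intro k _ hne
      by_contra hc
      apply hne
      simp [hext, hc]
  have ext_val : ∀ (w : {k : J // 1 < l k} → ℝ) (k : {k : J // 1 < l k}), ext w k = w k := by
    intro w k; simp only [hext]; rw [dif_pos k.2]
  have ext_dot : ∀ w, ext w ⬝ᵥ ext w = w ⬝ᵥ w := by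
    intro w
    simp only [dotProduct]
    rw [ext_sum w (ext w)]
    exact Finset.sum_congr rfl fun k _ => by rw [ext_val]
  set B' : Fin n → Matrix {k : J // 1 < l k} {k : J // 1 < l k} ℝ :=
    fun i => (B i).submatrix Subtype.val Subtype.val with hB'
  have mv : ∀ (X : Matrix J J ℝ) w (k : {k : J // 1 < l k}),
      (X.submatrix (Subtype.val : {k : J // 1 < l k} → J) (Subtype.val : {k : J // 1 < l k} → J)
        *ᵥ w) k = (X *ᵥ ext w) k := by
    intro X w k
    simp only [mulVec, dotProduct, submatrix_apply]
    have := ext_sum w (fun e => X k e)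
    simp only [mul_comm] at this ⊢
    exact this.symm
  have fm : ∀ (X : Matrix J J ℝ) w, w ⬝ᵥ
      (X.submatrix (Subtype.val : {k : J // 1 < l k} → J) (Subtype.val : {k : J // 1 < l k} → J)
        *ᵥ w) = ext w ⬝ᵥ X *ᵥ ext w := by
    intro X w
    simp only [dotProduct]
    rw [ext_sum w (X *ᵥ ext w)]
    exact Finset.sum_congr rfl fun k _ => by rw [mv]
  have hB's : ∀ i, (B' i)ᵀ = B' i := by
    intro i; simp only [hB', transpose_submatrix, hB]
  have hop' : ∀ i, (1 - B' i * B' i).PosSemidef := by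
    intro i
    refine psd_of (by simp [transpose_mul, hB's]) fun w => ?_
    have h1 := psd_form (hop i) (ext w)
    rw [Matrix.sub_mulVec, dotProduct_sub, one_mulVec, sq_form (hB i), ext_dot] at h1
    rw [Matrix.sub_mulVec, dotProduct_sub, one_mulVec, sq_form (hB's i)]
    have h2 : (B' i *ᵥ w) ⬝ᵥ (B' i *ᵥ w) ≤ (B i *ᵥ ext w) ⬝ᵥ (B i *ᵥ ext w) := by
      rw [dot_self, dot_self]
      calc ∑ k, (B' i *ᵥ w) k ^ 2 = ∑ k : {k : J // 1 < l k}, (B i *ᵥ ext w) k ^ 2 :=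
            Finset.sum_congr rfl fun k _ => by rw [mv]
        _ = ∑ k ∈ Finset.univ.filter (fun k => 1 < l k), (B i *ᵥ ext w) k ^ 2 := by
            rw [← Finset.sum_subtype_eq_sum_filter]; simp
        _ ≤ _ := Finset.sum_le_sum_of_subset_of_nonneg (Finset.filter_subset _ _)
            fun k _ _ => sq_nonneg _
    linarith
  have hF' : ∀ i, ∑ a, ∑ e, (B' i a e) ^ 2 ≤ (n : ℝ) / Real.log n ^ 3 := by
    intro i
    refine le_trans ?_ (hF i)
    have hsub : ∀ g : J → ℝ, (∀ k, 0 ≤ g k) → ∑ k : {k : J // 1 < l k}, g k ≤ ∑ k, g k := by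
      intro g hg
      calc ∑ k : {k : J // 1 < l k}, g k = ∑ k ∈ Finset.univ.filter (fun k => 1 < l k), g k := by
            rw [← Finset.sum_subtype_eq_sum_filter]; simp
        _ ≤ _ := Finset.sum_le_sum_of_subset_of_nonneg (Finset.filter_subset _ _)
            fun k _ _ => hg k
    calc ∑ a, ∑ e, (B' i a e) ^ 2
        ≤ ∑ a : {k : J // 1 < l k}, ∑ e, (B i a e) ^ 2 :=
          Finset.sum_le_sum fun a _ => hsub (fun e => (B i a e) ^ 2) fun e => sq_nonneg _
      _ ≤ _ := hsub (fun a => ∑ e, (B i a e) ^ 2) fun a => by positivity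
  have hx : ∃ x : Fin n → ℝ, (∀ i, x i = 1 ∨ x i = -1) ∧
      ∀ w, |w ⬝ᵥ lin B' x *ᵥ w| ≤ 2688032 * √(n : ℝ) * (w ⬝ᵥ w) := by
    rcases isEmpty_or_nonempty {k : J // 1 < l k} with he | he
    · exact ⟨fun _ => 1, fun _ => Or.inl rfl, fun w => by simp [dotProduct]⟩
    · exact core_small hn hcard B' hB's hop' hF'
  obtain ⟨x, hx, hw⟩ := hx
  refine ⟨x, hx, fun u => ?_⟩
  set X := lin B x with hX
  have hXs : Xᵀ = X := lin_symm hB x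
  have hlin : lin B' x = X.submatrix Subtype.val Subtype.val := by
    ext a e
    simp [lin, hX, hB', Matrix.sum_apply]
  set a : J → ℝ := ext fun k => u k with ha
  set b : J → ℝ := u - a with hb
  have ha1 : |a ⬝ᵥ X *ᵥ a| ≤ 2688032 * √(n : ℝ) * (a ⬝ᵥ a) := by
    have h := hw (fun k => u k)
    rw [hlin, fm] at h
    rw [← ext_dot] at h
    exact h
  have hav : ∀ k, a k = if 1 < l k then u k else 0 := by
    intro k; simp only [ha, hext]; split_ifs <;> rfl
  have hbv : ∀ k, b k = if 1 < l k then 0 else u k := by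
    intro k; simp only [hb, Pi.sub_apply, hav]; split_ifs <;> simp
  have haa : a ⬝ᵥ a ≤ u ⬝ᵥ u := by
    rw [dot_self, dot_self]
    refine Finset.sum_le_sum fun k _ => ?_
    rw [hav]; split_ifs
    · exact le_rfl
    · simpa using sq_nonneg (u k)
  have hXb : (X *ᵥ b) ⬝ᵥ (X *ᵥ b) ≤ n * (u ⬝ᵥ u) := by
    have h1 : (X *ᵥ b) ⬝ᵥ (X *ᵥ b) ≤ n * ∑ i, (B i *ᵥ b) ⬝ᵥ (B i *ᵥ b) := by
      simp only [dot_self]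
      rw [Finset.sum_comm, Finset.mul_sum]
      refine Finset.sum_le_sum fun k _ => ?_
      have e : (X *ᵥ b) k = ∑ i, x i * (B i *ᵥ b) k := by
        rw [hX, lin_mulVec]; simp [Finset.sum_apply]
      rw [e]
      have := sq_sum_le_card_mul_sum_sq (s := Finset.univ) (f := fun i => x i * (B i *ᵥ b) k)
      simp only [Finset.card_univ, Fintype.card_fin, mul_pow] at this
      refine this.trans (le_of_eq ?_)
      congr 1
      refine Finset.sum_congr rfl fun i _ => ?_
      rcases hx i with h | h <;> rw [h] <;> ring
    have h2 : ∑ i, (B i *ᵥ b) ⬝ᵥ (B i *ᵥ b) = ∑ k, l k * b k ^ 2 := by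
      calc _ = ∑ i, b ⬝ᵥ (B i * B i) *ᵥ b := Finset.sum_congr rfl fun i _ => (sq_form (hB i) b).symm
        _ = b ⬝ᵥ (∑ i, B i * B i) *ᵥ b := by rw [sum_mulVec, dotProduct_sum]
        _ = _ := by
            rw [hl]
            simp only [dotProduct, mulVec_diagonal]
            exact Finset.sum_congr rfl fun k _ => by ring
    rw [h2] at h1
    refine h1.trans (mul_le_mul_of_nonneg_left ?_ hn0.le)
    rw [dot_self]
    refine Finset.sum_le_sum fun k _ => ?_
    rw [hbv]; split_ifs with h
    · simpa using sq_nonneg (u k)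
    · push Not at h
      nlinarith [sq_nonneg (u k)]
  have hau : (a + u) ⬝ᵥ (a + u) ≤ 4 * (u ⬝ᵥ u) := by
    have := add_dot_le a u
    linarith
  have hsplit : u ⬝ᵥ X *ᵥ u = a ⬝ᵥ X *ᵥ a + (a + u) ⬝ᵥ X *ᵥ b := by
    have hc : u ⬝ᵥ X *ᵥ a = a ⬝ᵥ X *ᵥ u := by
      rw [dotProduct_mulVec, dotProduct_comm, ← mulVec_transpose, hXs]
    rw [hb]
    simp only [mulVec_sub, add_dotProduct, dotProduct_sub]
    linarith
  have hcr := dot_amgm (a + u) (X *ᵥ b) hs0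
  have h5 : (√(n : ℝ))⁻¹ * ((X *ᵥ b) ⬝ᵥ (X *ᵥ b)) ≤ √(n : ℝ) * (u ⬝ᵥ u) := by
    rw [inv_mul_le_iff₀ hs0, ← mul_assoc, hsq]; exact hXb
  have h6 : √(n : ℝ) * ((a + u) ⬝ᵥ (a + u)) ≤ √(n : ℝ) * (4 * (u ⬝ᵥ u)) :=
    mul_le_mul_of_nonneg_left hau hs0.le
  have h7 : 2688032 * √(n : ℝ) * (a ⬝ᵥ a) ≤ 2688032 * √(n : ℝ) * (u ⬝ᵥ u) :=
    mul_le_mul_of_nonneg_left haa (by positivity)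
  have h8 : 0 ≤ √(n : ℝ) * (u ⬝ᵥ u) := mul_nonneg hs0.le (dot_nonneg' u)
  rw [hsplit]
  have := abs_add_le (a ⬝ᵥ X *ᵥ a) ((a + u) ⬝ᵥ X *ᵥ b)
  linarith

theorem reduce {n : ℕ} (hn : 2 ≤ n) (A : Fin n → Matrix J J ℝ) (hA : ∀ i, (A i)ᵀ = A i)
    (hop : ∀ i, ((1 : Matrix J J ℝ) - A i * A i).PosSemidef)
    (hF : ∀ i, ∑ a, ∑ e, (A i a e) ^ 2 ≤ (n : ℝ) / Real.log n ^ 3) :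
    ∃ x : Fin n → ℝ, (∀ i, x i = 1 ∨ x i = -1) ∧
      ∀ u : J → ℝ, |u ⬝ᵥ lin A x *ᵥ u| ≤ 2688035 * √(n : ℝ) * (u ⬝ᵥ u) := by
  have hMs : (∑ i, A i * A i)ᵀ = ∑ i, A i * A i := by
    rw [transpose_sum]
    exact Finset.sum_congr rfl fun i _ => by rw [transpose_mul, hA]
  obtain ⟨V, l, hV, hV', hM⟩ := spec hMs
  have hsq : ∀ i, (Vᵀ * A i * V) * (Vᵀ * A i * V) = Vᵀ * (A i * A i) * V := by
    intro i
    calc (Vᵀ * A i * V) * (Vᵀ * A i * V) = Vᵀ * A i * (V * Vᵀ) * A i * V := by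
          simp only [Matrix.mul_assoc]
      _ = _ := by rw [hV', Matrix.mul_one]; simp only [Matrix.mul_assoc]
  have hBs : ∀ i, (Vᵀ * A i * V)ᵀ = Vᵀ * A i * V := by
    intro i; simp [transpose_mul, hA, Matrix.mul_assoc]
  have g1 : ∀ i, (1 - (Vᵀ * A i * V) * (Vᵀ * A i * V)).PosSemidef := by
    intro i
    have h1 := (hop i).conjTranspose_mul_mul_same V
    rw [conjTranspose_eq_transpose_of_trivial] at h1
    rw [hsq]
    rwa [Matrix.mul_sub, Matrix.sub_mul, Matrix.mul_one, hV] at h1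
  have g2 : ∀ i, ∑ a, ∑ e, ((Vᵀ * A i * V) a e) ^ 2 ≤ (n : ℝ) / Real.log n ^ 3 := by
    intro i
    refine le_trans (le_of_eq ?_) (hF i)
    rw [frob_trace (hBs i), frob_trace (hA i), hsq, Matrix.trace_mul_comm, ← Matrix.mul_assoc, hV',
      Matrix.one_mul]
  have g3 : ∑ i, (Vᵀ * A i * V) * (Vᵀ * A i * V) = diagonal l := by
    simp only [hsq]
    rw [← Matrix.sum_mul, ← Matrix.mul_sum, hM]
    calc Vᵀ * (V * diagonal l * Vᵀ) * V = (Vᵀ * V) * diagonal l * (Vᵀ * V) := by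
          simp only [Matrix.mul_assoc]
      _ = _ := by rw [hV]; simp
  obtain ⟨x, hx, hw⟩ := reduce_diag hn (fun i => Vᵀ * A i * V) hBs g1 g2 l g3
  · refine ⟨x, hx, fun u => ?_⟩
    have h := hw (Vᵀ *ᵥ u)
    have e : lin (fun i => Vᵀ * A i * V) x = Vᵀ * lin A x * V := by
      simp only [lin, Matrix.mul_sum, Matrix.sum_mul, Matrix.mul_smul, Matrix.smul_mul]
    have e2 : ∀ v : J → ℝ, (Vᵀ *ᵥ u) ⬝ᵥ (Vᵀ *ᵥ v) = u ⬝ᵥ v := by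
      intro v
      rw [dotProduct_mulVec, vecMul_transpose, mulVec_mulVec, hV', one_mulVec]
    have e3 : (Vᵀ * lin A x * V) *ᵥ (Vᵀ *ᵥ u) = Vᵀ *ᵥ (lin A x *ᵥ u) := by
      rw [mulVec_mulVec, Matrix.mul_assoc, hV', Matrix.mul_one, mulVec_mulVec]
    rw [e, e3, e2, e2] at h
    exact h

lemma norm_of_form {X : Matrix J J ℝ} (hX : Xᵀ = X) {c : ℝ} (hc : 0 < c)
    (h : ∀ w : J → ℝ, |w ⬝ᵥ X *ᵥ w| ≤ c * (w ⬝ᵥ w)) (w : J → ℝ) :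
    (X *ᵥ w) ⬝ᵥ (X *ᵥ w) ≤ c ^ 2 * (w ⬝ᵥ w) := by
  set v := X *ᵥ w with hv
  have h1 := (abs_le.mp (h (c • w + v))).2
  have h2 := (abs_le.mp (h (c • w - v))).1
  have hsw : w ⬝ᵥ X *ᵥ v = v ⬝ᵥ v := by
    rw [dotProduct_mulVec, ← mulVec_transpose, hX]
  simp only [mulVec_add, mulVec_sub, mulVec_smul, sub_dotProduct, dotProduct_sub, add_dotProduct,
    dotProduct_add, smul_dotProduct, dotProduct_smul, smul_eq_mul, ← hv, hsw] at h1 h2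
  have h3 : c * (4 * (v ⬝ᵥ v)) ≤ c * (2 * (c ^ 2 * (w ⬝ᵥ w)) + 2 * (v ⬝ᵥ v)) := by linarith
  have := le_of_mul_le_mul_left h3 hc
  linarith

lemma toLp_norm_sq (v : J → ℝ) : ‖(WithLp.toLp 2 v : EuclideanSpace ℝ J)‖ ^ 2 = v ⬝ᵥ v := by
  rw [EuclideanSpace.real_norm_sq_eq, dot_self]

end
end MSp

/-- **Matrix Spencer up to poly-logarithmic rank (Theorem 1.3).** There is a universal
constant `C > 0` such that for all `n ≥ 2`, `d ≥ 1`, and symmetric matrices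
`A 1, …, A n ∈ ℝ^{d×d}` with `‖A i‖_op ≤ 1` and `‖A i‖_F² ≤ n / (log n)³`, there exist
signs `x ∈ {±1}ⁿ` with `‖∑ i, x i • A i‖_op ≤ C √n`. -/
theorem matrix_spencer_polylog_rank :
    ∃ C : ℝ, 0 < C ∧ ∀ (n d : ℕ), 2 ≤ n → 0 < d →
      ∀ A : Fin n → Matrix (Fin d) (Fin d) ℝ,
        (∀ i, (A i).IsSymm) →
        (∀ i, opNorm (A i) ≤ 1) →
        (∀ i, frobNormSq (A i) ≤ (n : ℝ) / (Real.log n) ^ 3) →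
        ∃ x : Fin n → ℝ, (∀ i, x i = 1 ∨ x i = -1) ∧
          opNorm (∑ i, x i • A i) ≤ C * Real.sqrt n := by
  refine ⟨2688035, by norm_num, ?_⟩
  intro n d hn hd A hA hop hF
  have hA' : ∀ i, (A i).transpose = A i := fun i => hA i
  have key : ∀ (M : Matrix (Fin d) (Fin d) ℝ) (v : EuclideanSpace ℝ (Fin d)),
      ‖LinearMap.toContinuousLinearMap (Matrix.toEuclideanLin M) v‖ ^ 2 =
        dotProduct (M.mulVec v.ofLp) (M.mulVec v.ofLp) := by
    intro M v
    exact MSp.toLp_norm_sq (M.mulVec v.ofLp)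
  have hop' : ∀ i, ((1 : Matrix (Fin d) (Fin d) ℝ) - A i * A i).PosSemidef := by
    intro i
    refine MSp.psd_of (by simp [Matrix.transpose_mul, hA']) fun w => ?_
    rw [Matrix.sub_mulVec, dotProduct_sub, Matrix.one_mulVec, MSp.sq_form (hA' i)]
    have h1 : ‖LinearMap.toContinuousLinearMap (Matrix.toEuclideanLin (A i)) (WithLp.toLp 2 w)‖ ≤
        1 * ‖(WithLp.toLp 2 w : EuclideanSpace ℝ (Fin d))‖ :=
      ContinuousLinearMap.le_of_opNorm_le _ (hop i) _
    have h2 := pow_le_pow_left₀ (norm_nonneg _) h1 2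
    rw [key, one_mul, MSp.toLp_norm_sq] at h2
    exact sub_nonneg.mpr h2
  obtain ⟨x, hx, hw⟩ := MSp.reduce hn A hA' hop' hF
  refine ⟨x, hx, ?_⟩
  have hc : 0 < 2688035 * Real.sqrt n := by
    have : (0 : ℝ) < n := by exact_mod_cast (by omega : 0 < n)
    positivity
  unfold opNorm
  refine ContinuousLinearMap.opNorm_le_bound _ hc.le fun v => ?_
  refine le_of_sq_le_sq ?_ (by positivity)
  rw [key, mul_pow]
  have h := MSp.norm_of_form (MSp.lin_symm hA' x) hc hw v.ofLp
  have e : ‖v‖ ^ 2 = dotProduct v.ofLp v.ofLp := MSp.toLp_norm_sq v.ofLp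
  rw [e]
  exact h
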